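/- Let P be a polynomial with integer coefficients of degree r ≥ 2 whose coefficient of x^(r−1) is equal to zero, and let s be a nonzero integer. Then there exist a positive constant C and a threshold N_0, both depending only on P and s, such that for all integers N ≥ N_0, the number of integers n with N ≤ n < 2N for which there exists a positive integer x with s·n! = P(x) is at most C·N^(33/34). -/

import Mathlib

namespace PFact
open Polynomial Finset

/-- the product `(X+1)...(X+H)` -/
noncomputable def gp (H : ℕ) : ℤ[X] := ∏ j ∈ Icc 1 H, (X + C (j : ℤ))

/-- logarithmic derivative of the algebraic function, times r g -/
noncomputable def up (H h : ℕ) : ℤ[X] :=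
  ∑ j ∈ Icc 1 h, ∏ i ∈ (Icc 1 H).erase j, (X + C (i : ℤ))

/-- the twisted derivation -/
noncomputable def tw (r H h : ℕ) (A : ℤ[X]) : ℤ[X] :=
  C (r : ℤ) * gp H * derivative A + up H h * A

/-- iterates of the twisted derivation -/
noncomputable def twi (r H h : ℕ) (A : ℤ[X]) (i : ℕ) : ℤ[X] := (tw r H h)^[i] A

lemma twi_zero (r H h : ℕ) (A : ℤ[X]) : twi r H h A 0 = A := rfl

lemma twi_succ (r H h : ℕ) (A : ℤ[X]) (i : ℕ) :
    twi r H h A (i+1) = C (r : ℤ) * gp H * derivative (twi r H h A i) + up H h * twi r H h A i := by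
  unfold twi
  rw [Function.iterate_succ_apply']
  rfl

lemma gp_factor (H h : ℕ) (h1 : 1 ≤ h) (hH : h ≤ H) :
    gp H = (X + C (h : ℤ)) * ∏ i ∈ (Icc 1 H).erase h, (X + C (i : ℤ)) := by
  unfold gp
  exact (mul_prod_erase (Icc 1 H) (fun j : ℕ => (X + C (j : ℤ) : ℤ[X]))
    (by simp [h1, hH])).symm

lemma gstar_eval_ne (H h : ℕ) :
    (∏ i ∈ (Icc 1 H).erase h, (X + C (i : ℤ)) : ℤ[X]).eval (-(h:ℤ)) ≠ 0 := by
  rw [eval_prod, prod_ne_zero_iff]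
  intro i hi
  simp only [mem_erase] at hi
  simp only [eval_add, eval_X, eval_C]
  intro hh
  apply hi.1
  have : (i:ℤ) = h := by linarith
  exact_mod_cast this

lemma up_eval_self (H h : ℕ) (h1 : 1 ≤ h) (hH : h ≤ H) :
    (up H h).eval (-(h:ℤ)) = (∏ i ∈ (Icc 1 H).erase h, (X + C (i : ℤ)) : ℤ[X]).eval (-(h:ℤ)) := by
  unfold up
  rw [eval_finsetSum]
  rw [sum_eq_single h]
  · intro b hb hbh
    rw [eval_prod]
    apply prod_eq_zero (i := h)
    · simp only [mem_erase, mem_Icc]; exact ⟨hbh.symm, h1, hH⟩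
    · simp
  · intro hh; exact absurd (by simp [h1]) hh

lemma up_eval_lt (H h l : ℕ) (h1 : 1 ≤ h) (hH : h ≤ H) (hl : l < h) :
    (up H l).eval (-(h:ℤ)) = 0 := by
  unfold up
  rw [eval_finsetSum]
  apply sum_eq_zero
  intro b hb
  rw [eval_prod]
  apply prod_eq_zero (i := h)
  · simp only [mem_erase, mem_Icc] at hb ⊢; exact ⟨by omega, h1, hH⟩
  · simp

/-- residue argument -/
lemma residue_lt (r H h l : ℕ) (hr : 2 ≤ r) (hH : h ≤ H) (hl : l < h) (B D : ℤ[X])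
    (hB : B ≠ 0) (hD : D ≠ 0)
    (heq : C (r : ℤ) * gp H * (D * derivative B - B * derivative D) = (up H l - up H h) * B * D) :
    False := by
  have h1 : 1 ≤ h := by omega
  obtain ⟨P, hP, hPn⟩ := exists_eq_pow_rootMultiplicity_mul_and_not_dvd B hB (-(h:ℤ))
  obtain ⟨Q, hQ, hQn⟩ := exists_eq_pow_rootMultiplicity_mul_and_not_dvd D hD (-(h:ℤ))
  set a := rootMultiplicity (-(h:ℤ)) B
  set b := rootMultiplicity (-(h:ℤ)) D
  have hY : (X - C (-(h:ℤ)) : ℤ[X]) = X + C (h:ℤ) := by simp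
  rw [hY] at hP hQ hPn hQn
  have hPe : P.eval (-(h:ℤ)) ≠ 0 := by
    intro h0; apply hPn; rw [← hY]; exact dvd_iff_isRoot.mpr h0
  have hQe : Q.eval (-(h:ℤ)) ≠ 0 := by
    intro h0; apply hQn; rw [← hY]; exact dvd_iff_isRoot.mpr h0
  set Y : ℤ[X] := X + C (h:ℤ) with hYdef
  have hdY : derivative Y = 1 := by simp [hYdef]
  have hY0 : Y ≠ 0 := X_add_C_ne_zero _
  have key : ∀ (n : ℕ) (R : ℤ[X]), Y * derivative (Y^n * R) = Y^n * (C (n:ℤ) * R + Y * derivative R) := by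
    intro n R
    rw [derivative_mul, derivative_pow, hdY]
    rcases n with _ | n
    · simp
    · simp [pow_succ]; ring
  rw [gp_factor H h h1 hH] at heq
  set gs := ∏ i ∈ (Icc 1 H).erase h, (X + C (i : ℤ)) with hgs
  have e2 : (Y^a * Y^b) * (C (r:ℤ) * gs * (Q * (C (a:ℤ) * P + Y * derivative P) - P * (C (b:ℤ) * Q + Y * derivative Q)))
      = (Y^a * Y^b) * ((up H l - up H h) * P * Q) := by
    have e3 := key a P
    have e4 := key b Q
    rw [← hP] at e3
    rw [← hQ] at e4
    calc _ = C (r:ℤ) * gs * ((Y^b * Q) * (Y^a * (C (a:ℤ) * P + Y * derivative P)) - (Y^a * P) * (Y^b * (C (b:ℤ) * Q + Y * derivative Q))) := by ring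
      _ = C (r:ℤ) * gs * (D * (Y * derivative B) - B * (Y * derivative D)) := by rw [← e3, ← e4, ← hP, ← hQ]
      _ = (C (r:ℤ) * (Y * gs)) * (D * derivative B - B * derivative D) := by ring
      _ = (up H l - up H h) * B * D := heq
      _ = _ := by conv_lhs => rw [hP, hQ]
                  ring
  have e5 := mul_left_cancel₀ (mul_ne_zero (pow_ne_zero _ hY0) (pow_ne_zero _ hY0)) e2
  have e6 := congrArg (eval (-(h:ℤ))) e5
  have hYe : Y.eval (-(h:ℤ)) = 0 := by simp [hYdef]
  have hgse := gstar_eval_ne H h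
  rw [← hgs] at hgse
  simp only [eval_mul, eval_sub, eval_add, eval_C, hYe, up_eval_lt H h l h1 hH hl,
    up_eval_self H h h1 hH, zero_mul, add_zero] at e6
  rw [← hgs] at e6
  have e7 : (eval (-(h:ℤ)) gs * eval (-(h:ℤ)) P * eval (-(h:ℤ)) Q) * ((r:ℤ) * (a - b) + 1) = 0 := by
    linear_combination e6
  have e8 : (r:ℤ) * (a - b) + 1 = 0 := by
    rcases mul_eq_zero.mp e7 with h0 | h0
    · exact absurd h0 (mul_ne_zero (mul_ne_zero hgse hPe) hQe)
    · exact h0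
  have e9 : (r:ℤ) ∣ 1 := ⟨b - a, by linarith⟩
  have := Int.le_of_dvd one_pos e9
  omega

lemma residue (r H h l : ℕ) (hr : 2 ≤ r) (hH : h ≤ H) (hl' : l ≤ H) (hl : l ≠ h) (B D : ℤ[X])
    (hB : B ≠ 0) (hD : D ≠ 0)
    (heq : C (r : ℤ) * gp H * (D * derivative B - B * derivative D) = (up H l - up H h) * B * D) :
    False := by
  rcases lt_or_gt_of_ne hl with h1 | h1
  · exact residue_lt r H h l hr hH h1 B D hB hD heq
  · refine residue_lt r H l h hr hl' h1 D B hD hB ?_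
    linear_combination -heq

/-- Non-vanishing of the twisted Wronskian. -/
lemma wronskian_ne_zero (r H : ℕ) (hr : 2 ≤ r) (k : ℕ) : ∀ (h : Fin k → ℕ) (A : Fin k → ℤ[X]),
    Function.Injective h → (∀ l, h l ≤ H) → (∀ l, A l ≠ 0) →
    (Matrix.of fun i l : Fin k => twi r H (h l) (A l) i).det ≠ 0 := by
  induction k with
  | zero => intro h A _ _ _; simp
  | succ k ih =>
    intro h A hinj hH hA hdet
    obtain ⟨B, hB0, hB⟩ := Matrix.exists_mulVec_eq_zero_iff.mpr hdet
    have hdet' := ih (fun l => h l.castSucc) (fun l => A l.castSucc)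
      (fun a b hab => Fin.castSucc_injective _ (hinj hab)) (fun l => hH _) (fun l => hA _)
    have rel : ∀ i : ℕ, i < k+1 → ∑ l, twi r H (h l) (A l) i * B l = 0 := by
      intro i hi
      have := congrFun hB ⟨i, hi⟩
      simpa [Matrix.mulVec, dotProduct] using this
    set M := Fin.last k
    have hBM : B M ≠ 0 := by
      intro h0
      apply hB0
      have : (fun l : Fin k => B l.castSucc) = 0 := by
        apply Matrix.eq_zero_of_mulVec_eq_zero hdet'
        ext1 i
        have := rel i (by omega)
        rw [Fin.sum_univ_castSucc] at this
        rw [show B (Fin.last k) = 0 from h0, mul_zero, add_zero] at this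
        simpa [Matrix.mulVec, dotProduct] using this
      ext1 l
      refine Fin.lastCases ?_ (fun j => ?_) l
      · exact h0
      · exact congrFun this j
    have rel2 : ∀ i : ℕ, i < k → ∑ l, twi r H (h l) (A l) i *
        (C (r:ℤ) * gp H * derivative (B l) - up H (h l) * B l) = 0 := by
      intro i hi
      have e1 := rel i (by omega)
      have e2 := rel (i+1) (by omega)
      have e3 := congrArg derivative e1
      rw [derivative_sum] at e3
      simp only [derivative_mul, derivative_zero] at e3
      simp only [twi_succ] at e2
      have e4 : C (r:ℤ) * gp H * (∑ l, (derivative (twi r H (h l) (A l) i) * B l +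
        twi r H (h l) (A l) i * derivative (B l))) - ∑ l, (C (r : ℤ) * gp H * derivative (twi r H (h l) (A l) i) + up H (h l) * twi r H (h l) (A l) i) * B l = 0 := by
        rw [e3, e2]; simp
      rw [← e4, mul_sum, ← sum_sub_distrib]
      apply sum_congr rfl
      intro l _
      ring
    have vz : (fun l : Fin k => B M * (C (r:ℤ) * gp H * derivative (B l.castSucc) - up H (h l.castSucc) * B l.castSucc)
        - (C (r:ℤ) * gp H * derivative (B M) - up H (h M) * B M) * B l.castSucc) = 0 := by
      apply Matrix.eq_zero_of_mulVec_eq_zero hdet'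
      ext1 i
      have e1 := rel i (by omega)
      have e2 := rel2 i i.2
      rw [Fin.sum_univ_castSucc] at e1 e2
      simp only [Matrix.mulVec, dotProduct, Matrix.of_apply, Pi.zero_apply]
      have e3 : B M * (∑ l : Fin k, twi r H (h l.castSucc) (A l.castSucc) i *
        (C (r:ℤ) * gp H * derivative (B l.castSucc) - up H (h l.castSucc) * B l.castSucc)) - (C (r:ℤ) * gp H * derivative (B M) - up H (h M) * B M) * (∑ l : Fin k, twi r H (h l.castSucc) (A l.castSucc) i * B l.castSucc) = 0 := by
        linear_combination (B M) * e2 - (C (r:ℤ) * gp H * derivative (B M) - up H (h M) * B M) * e1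
      rw [← e3, mul_sum, mul_sum, ← sum_sub_distrib]
      apply sum_congr rfl
      intro l _
      ring
    have hex : ∃ l : Fin k, B l.castSucc ≠ 0 := by
      by_contra hne
      push Not at hne
      have e1 := rel 0 (by omega)
      rw [Fin.sum_univ_castSucc] at e1
      simp only [hne, mul_zero, sum_const_zero, zero_add, twi_zero] at e1
      exact (mul_ne_zero (hA _) hBM) e1
    obtain ⟨l, hl⟩ := hex
    have e1 := congrFun vz l
    simp only [Pi.zero_apply] at e1
    refine residue r H (h M) (h l.castSucc) hr (hH _) (hH _) ?_ (B l.castSucc) (B M) hl hBM ?_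
    · intro hh
      exact absurd (hinj hh) (Fin.castSucc_lt_last l).ne
    · linear_combination e1

end PFact

namespace PFact
open Polynomial Finset

/-- determinant with prescribed rows -/
noncomputable def detRows (r H k : ℕ) (h : Fin k → ℕ) (A : Fin k → ℤ[X]) (ι : Fin k → ℕ) : ℤ[X] :=
  (Matrix.of fun i l : Fin k => twi r H (h l) (A l) (ι i)).det

lemma detRows_deriv (r H k : ℕ) (h : Fin k → ℕ) (A : Fin k → ℤ[X]) (ι : Fin k → ℕ) :
    C (r:ℤ) * gp H * derivative (detRows r H k h A ι) =
      ∑ j, detRows r H k h A (Function.update ι j (ι j + 1))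
        - (∑ l, up H (h l)) * detRows r H k h A ι := by
  unfold detRows
  simp only [Matrix.det_apply, Matrix.of_apply]
  rw [derivative_sum, mul_sum, sum_comm, mul_sum, ← sum_sub_distrib]
  apply sum_congr rfl
  intro σ _
  rw [derivative_smul, ← smul_sum]
  rw [mul_smul_comm, mul_smul_comm, ← smul_sub]
  congr 1
  rw [derivative_prod_finset, mul_sum, sum_mul]
  rw [← Equiv.sum_comp σ (fun x => ∏ i, twi r H (h i) (A i) (Function.update ι x (ι x + 1) (σ i)))]
  rw [← sum_sub_distrib]
  apply sum_congr rfl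
  intro i _
  have e1 : ∏ x, twi r H (h x) (A x) (Function.update ι (σ i) (ι (σ i) + 1) (σ x)) =
     twi r H (h i) (A i) (ι (σ i) + 1) * ∏ x ∈ univ.erase i, twi r H (h x) (A x) (ι (σ x)) := by
    rw [← mul_prod_erase univ _ (mem_univ i)]
    congr 1
    · simp
    · apply prod_congr rfl
      intro x hx
      simp only [mem_erase] at hx
      rw [Function.update_of_ne]
      intro hh
      exact hx.1 (σ.injective hh)
  have e2 : ∏ x, twi r H (h x) (A x) (ι (σ x)) =
     twi r H (h i) (A i) (ι (σ i)) * ∏ x ∈ univ.erase i, twi r H (h x) (A x) (ι (σ x)) := by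
    rw [← mul_prod_erase univ _ (mem_univ i)]
  rw [e1, e2, twi_succ]
  ring

lemma dvd_step (H r n s : ℕ) (hr : r ≠ 0) (E : ℤ[X]) (h0 : E.eval (n:ℤ) = 0)
    (hd : (X - C (n:ℤ))^s ∣ C (r:ℤ) * gp H * derivative E) : (X - C (n:ℤ))^(s+1) ∣ E := by
  by_cases hE : E = 0
  · rw [hE]; exact dvd_zero _
  obtain ⟨P, hP, hPn⟩ := exists_eq_pow_rootMultiplicity_mul_and_not_dvd E hE (n:ℤ)
  set a := rootMultiplicity (n:ℤ) E with ha
  have hapos : 0 < a := by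
    rw [ha]; exact (rootMultiplicity_pos hE).mpr h0
  by_contra hnd
  have hlt : a < s + 1 := by
    by_contra hle
    apply hnd
    rw [hP]
    exact Dvd.dvd.mul_right (pow_dvd_pow _ (by omega)) _
  clear_value a
  obtain ⟨b, rfl⟩ : ∃ b, a = b + 1 := ⟨a - 1, by omega⟩
  set Y : ℤ[X] := X - C (n:ℤ) with hY
  have hdY : derivative Y = 1 := by simp [hY]
  have hY0 : Y ≠ 0 := X_sub_C_ne_zero _
  have hPe : P.eval (n:ℤ) ≠ 0 := by
    intro h0; apply hPn; exact dvd_iff_isRoot.mpr h0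
  have e1 : derivative E = Y^b * (C ((b+1 : ℕ):ℤ) * P + Y * derivative P) := by
    rw [hP, derivative_mul, derivative_pow, hdY]
    simp [pow_succ]; ring
  have hd2 : Y^(b+1) ∣ C (r:ℤ) * gp H * derivative E := (pow_dvd_pow _ (by omega)).trans hd
  rw [e1, pow_succ, show C (r:ℤ) * gp H * (Y^b * (C ((b+1 : ℕ):ℤ) * P + Y * derivative P)) =
    Y^b * (C (r:ℤ) * gp H * (C ((b+1 : ℕ):ℤ) * P + Y * derivative P)) by ring] at hd2
  have hd3 := (mul_dvd_mul_iff_left (pow_ne_zero b hY0)).mp hd2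
  have hroot := dvd_iff_isRoot.mp hd3
  rw [IsRoot.def] at hroot
  simp only [eval_mul, eval_add, eval_C] at hroot
  have hYe : Y.eval (n:ℤ) = 0 := by simp [hY]
  rw [hYe, zero_mul, add_zero] at hroot
  have hg : (gp H).eval (n:ℤ) ≠ 0 := by
    unfold gp
    rw [eval_prod, prod_ne_zero_iff]
    intro i hi
    simp only [mem_Icc] at hi
    simp only [eval_add, eval_X, eval_C]
    have := hi.1
    omega
  have : ((b+1:ℕ):ℤ) ≠ 0 := by positivity
  have hr' : (r:ℤ) ≠ 0 := by exact_mod_cast hr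
  exact (mul_ne_zero (mul_ne_zero hr' hg) (mul_ne_zero this hPe)) hroot

lemma detRows_dvd (r H k : ℕ) (hr : r ≠ 0) (h : Fin k → ℕ) (A : Fin k → ℤ[X]) (n I : ℕ)
    (v : Fin k → ℤ) (hv : v ≠ 0)
    (hrel : ∀ i ≤ I, ∑ l, (twi r H (h l) (A l) i).eval (n:ℤ) * v l = 0) (s : ℕ) :
    ∀ ι : Fin k → ℕ, (∀ j, ι j + s ≤ I + 1) → (X - C (n:ℤ))^s ∣ detRows r H k h A ι := by
  induction s with
  | zero => intro ι _; simp
  | succ s ih =>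
    intro ι hι
    apply dvd_step H r n s hr
    · unfold detRows
      rw [← coe_evalRingHom, RingHom.map_det]
      apply Matrix.exists_mulVec_eq_zero_iff.mp
      refine ⟨v, hv, ?_⟩
      ext1 i
      have := hrel (ι i) (by have := hι i; omega)
      simpa [Matrix.mulVec, dotProduct] using this
    · rw [detRows_deriv]
      apply dvd_sub
      · apply dvd_sum
        intro j _
        apply ih
        intro j'
        by_cases hj : j' = j
        · subst hj; simp only [Function.update_self]; have := hι j'; omega
        · rw [Function.update_of_ne hj]; have := hι j'; omega
      · apply Dvd.dvd.mul_left
        apply ih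
        intro j'; have := hι j'; omega

lemma natDegree_gp (H : ℕ) : (gp H).natDegree ≤ H := by
  unfold gp
  refine (natDegree_prod_le _ _).trans ?_
  refine (sum_le_sum (fun i _ => (natDegree_X_add_C _).le)).trans ?_
  simp

lemma natDegree_up (H h : ℕ) : (up H h).natDegree ≤ H := by
  unfold up
  apply natDegree_sum_le_of_forall_le
  intro j _
  refine (natDegree_prod_le _ _).trans ?_
  refine (sum_le_sum (fun i _ => (natDegree_X_add_C _).le)).trans ?_
  simp only [sum_const, smul_eq_mul, mul_one]
  exact (card_le_card (erase_subset _ _)).trans (by simp)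

lemma natDegree_twi (r H h D : ℕ) (A : ℤ[X]) (hA : A.natDegree ≤ D) (i : ℕ) :
    (twi r H h A i).natDegree ≤ D + i * H := by
  induction i with
  | zero => simpa [twi_zero] using hA
  | succ i ih =>
    rw [twi_succ]
    apply natDegree_add_le_of_degree_le
    · refine natDegree_mul_le.trans ?_
      have h1 : (C (r:ℤ) * gp H).natDegree ≤ H := (natDegree_C_mul_le _ _).trans (natDegree_gp H)
      have h2 := natDegree_derivative_le (twi r H h A i)
      have : (i+1)*H = i*H + H := by ring
      omega
    · refine natDegree_mul_le.trans ?_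
      have h1 := natDegree_up H h
      have : (i+1)*H = i*H + H := by ring
      omega

lemma natDegree_detRows (r H k D : ℕ) (h : Fin k → ℕ) (A : Fin k → ℤ[X])
    (hA : ∀ l, (A l).natDegree ≤ D) :
    (detRows r H k h A (fun i => i)).natDegree ≤ k * (D + k * H) := by
  unfold detRows
  rw [Matrix.det_apply]
  apply natDegree_sum_le_of_forall_le
  intro σ _
  refine (natDegree_smul_le _ _).trans ?_
  refine (natDegree_prod_le _ _).trans ?_
  have : ∀ l ∈ (univ : Finset (Fin k)), (Matrix.of (fun i l : Fin k => twi r H (h l) (A l) i) (σ l) l).natDegree ≤ D + k * H := by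
    intro l _
    simp only [Matrix.of_apply]
    refine (natDegree_twi r H (h l) D (A l) (hA l) _).trans ?_
    have : ((σ l : Fin k):ℕ) ≤ k := (σ l).2.le
    gcongr
  refine (sum_le_sum this).trans ?_
  simp

/-- Zero estimate. -/
lemma zero_estimate (r H k D I : ℕ) (hr : 2 ≤ r) (h : Fin k → ℕ) (A : Fin k → ℤ[X])
    (hinj : Function.Injective h) (hH : ∀ l, h l ≤ H) (hA0 : ∀ l, A l ≠ 0)
    (hA : ∀ l, (A l).natDegree ≤ D) (S : Finset ℕ) (v : ℕ → Fin k → ℤ)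
    (hv : ∀ n ∈ S, v n ≠ 0)
    (hrel : ∀ n ∈ S, ∀ i ≤ I, ∑ l, (twi r H (h l) (A l) i).eval (n:ℤ) * v n l = 0) :
    S.card * (I + 1 - k) ≤ k * (D + k * H) := by
  have hne := wronskian_ne_zero r H hr k h A hinj hH hA0
  set Δ := detRows r H k h A (fun i => i) with hΔ
  have hne' : Δ ≠ 0 := hne
  have hmult : ∀ n ∈ S, I + 1 - k ≤ Δ.roots.count (n:ℤ) := by
    intro n hn
    rw [count_roots, le_rootMultiplicity_iff hne']
    by_cases hk : k ≤ I + 1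
    · apply detRows_dvd r H k (by omega) h A n I (v n) (hv n hn) (hrel n hn)
      intro j
      have := j.2
      omega
    · rw [show I + 1 - k = 0 by omega]; simp
  calc S.card * (I + 1 - k) = ∑ n ∈ S, (I + 1 - k) := by simp
    _ ≤ ∑ n ∈ S, Δ.roots.count (n:ℤ) := sum_le_sum hmult
    _ = ∑ a ∈ S.image (fun n : ℕ => (n:ℤ)), Δ.roots.count a := by
        rw [sum_image]; intro a _ b _ hab; exact Int.ofNat.inj hab
    _ ≤ Δ.roots.card := by
        calc _ ≤ ∑ a ∈ S.image (fun n : ℕ => (n:ℤ)) ∪ Δ.roots.toFinset, Δ.roots.count a :=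
              sum_le_sum_of_subset subset_union_left
          _ = Δ.roots.card := Multiset.sum_count_eq_card (fun a ha => by simp only [mem_union, Multiset.mem_toFinset]; exact Or.inr ha)
    _ ≤ Δ.natDegree := card_roots' _
    _ ≤ _ := natDegree_detRows r H k D h A hA

end PFact

namespace PFact
open Polynomial Finset

/-- the algebraic function `((z+1)...(z+h))^(1/r)` -/
noncomputable def al (r h : ℕ) (z : ℂ) : ℂ :=
  Complex.exp ((1/(r:ℂ)) * ∑ j ∈ Icc 1 h, Complex.log (z + j))

lemma re_slit {z : ℂ} (hz : 0 < z.re) (j : ℕ) : z + j ∈ Complex.slitPlane := by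
  left
  simp only [Complex.add_re, Complex.natCast_re]
  positivity

lemma hasDerivAt_al (r h : ℕ) {z : ℂ} (hz : 0 < z.re) :
    HasDerivAt (al r h) (al r h z * ((1/(r:ℂ)) * ∑ j ∈ Icc 1 h, 1/(z + j))) z := by
  unfold al
  apply HasDerivAt.cexp
  apply HasDerivAt.const_mul
  apply HasDerivAt.fun_sum
  intro j _
  exact ((hasDerivAt_id z).add_const (j:ℂ)).clog (re_slit hz j)

lemma gp_mul_sum (H h : ℕ) (hH : h ≤ H) {z : ℂ} (hz : 0 < z.re) :
    aeval z (gp H) * ∑ j ∈ Icc 1 h, 1/(z + j) = aeval z (up H h) := by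
  unfold up
  rw [map_sum, mul_sum]
  apply sum_congr rfl
  intro j hj
  simp only [mem_Icc] at hj
  rw [gp_factor H j hj.1 (hj.2.trans hH), map_mul]
  have hne : z + j ≠ 0 := Complex.slitPlane_ne_zero (re_slit hz j)
  have : aeval z (X + C (j:ℤ)) = z + j := by simp
  rw [this]
  field_simp

/-- the iterated forms as functions -/
noncomputable def Ff (r H k : ℕ) (h : Fin k → ℕ) (A : Fin k → ℤ[X]) (i : ℕ) (z : ℂ) : ℂ :=
  ∑ l, aeval z (twi r H (h l) (A l) i) * al r (h l) z

lemma hasDerivAt_Ff (r H k : ℕ) (hr : r ≠ 0) (h : Fin k → ℕ) (hH : ∀ l, h l ≤ H)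
    (A : Fin k → ℤ[X]) (i : ℕ) {z : ℂ} (hz : 0 < z.re) :
    ∃ F' : ℂ, HasDerivAt (Ff r H k h A i) F' z ∧
      (r:ℂ) * aeval z (gp H) * F' = Ff r H k h A (i+1) z := by
  refine ⟨∑ l, (aeval z (derivative (twi r H (h l) (A l) i)) * al r (h l) z +
    aeval z (twi r H (h l) (A l) i) * (al r (h l) z * ((1/(r:ℂ)) * ∑ j ∈ Icc 1 (h l), 1/(z + j)))), ?_, ?_⟩
  · unfold Ff
    apply HasDerivAt.fun_sum
    intro l _
    exact (Polynomial.hasDerivAt_aeval _ z).mul (hasDerivAt_al r (h l) hz)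
  · unfold Ff
    rw [mul_sum]
    apply sum_congr rfl
    intro l _
    rw [twi_succ]
    simp only [map_add, map_mul]
    rw [← gp_mul_sum H (h l) (hH l) hz]
    have hr' : (r:ℂ) ≠ 0 := by exact_mod_cast hr
    have : aeval z (C (r:ℤ)) = (r:ℂ) := by simp
    rw [this]
    field_simp

lemma norm_gp_le (H n : ℕ) (hn : 2 * H ≤ n) {z : ℂ} (hz : ‖z‖ ≤ 3/2 * n) :
    ‖aeval z (gp H)‖ ≤ (2 * n : ℝ)^H := by
  unfold gp
  rw [map_prod, norm_prod]
  calc ∏ j ∈ Icc 1 H, ‖aeval z (X + C (j:ℤ))‖ ≤ ∏ j ∈ Icc 1 H, (2 * n : ℝ) := by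
        apply prod_le_prod
        · intro i _; positivity
        · intro j hj
          simp only [mem_Icc] at hj
          have e : aeval z (X + C (j:ℤ)) = z + j := by simp
          rw [e]
          refine (norm_add_le _ _).trans ?_
          rw [Complex.norm_natCast]
          have : (2:ℝ) * j ≤ n := by exact_mod_cast (by omega : 2 * j ≤ n)
          linarith
    _ = _ := by simp

/-- Cauchy estimates for the iterated forms. -/
lemma Ff_bound (r H k : ℕ) (hr : r ≠ 0) (h : Fin k → ℕ) (hH : ∀ l, h l ≤ H)
    (A : Fin k → ℤ[X]) (n I : ℕ) (hn0 : 0 < n) (hn : 2 * H ≤ n) (M : ℝ)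
    (hM : ∀ z ∈ Metric.closedBall (n:ℂ) (n/2), ‖Ff r H k h A 0 z‖ ≤ M) (i : ℕ) (hi : i ≤ I) :
    ‖Ff r H k h A i n‖ ≤ M * (r * (2 * n : ℝ)^H * (2 * (I+1)))^i := by
  have hn0' : (1:ℝ) ≤ n := by exact_mod_cast hn0
  set δ : ℝ := n / (2 * (I+1)) with hδ
  have hδ0 : 0 < δ := by positivity
  have hI : δ * (I + 1) = n / 2 := by rw [hδ]; field_simp
  have hM0 : 0 ≤ M := (norm_nonneg _).trans (hM n (Metric.mem_closedBall_self (by positivity)))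
  have hre : ∀ z ∈ Metric.closedBall (n:ℂ) (n/2), 0 < z.re := by
    intro z hz
    rw [Metric.mem_closedBall, dist_eq_norm] at hz
    have := (Complex.abs_re_le_norm (z - n)).trans hz
    simp only [Complex.sub_re, Complex.natCast_re] at this
    have := (abs_le.mp this).1
    linarith
  have key : ∀ i : ℕ, i ≤ I → ∀ z ∈ Metric.closedBall (n:ℂ) (n/2 - i * δ),
      ‖Ff r H k h A i z‖ ≤ M * (r * (2 * n : ℝ)^H * (2 * (I+1)))^i := by
    intro i
    induction i with
    | zero => intro _ z hz; simpa using hM z (by simpa using hz)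
    | succ i ih =>
      intro hi z hz
      have ih' := ih (by omega)
      push_cast at hz
      have hiI : (i:ℝ) + 1 ≤ I := by exact_mod_cast hi
      have hsub : Metric.closedBall z δ ⊆ Metric.closedBall (n:ℂ) (n/2 - i * δ) := by
        apply Metric.closedBall_subset_closedBall'
        rw [Metric.mem_closedBall] at hz
        linarith
      have hsub2 : Metric.closedBall (n:ℂ) (n/2 - i * δ) ⊆ Metric.closedBall (n:ℂ) (n/2) := by
        apply Metric.closedBall_subset_closedBall
        have : 0 ≤ i * δ := by positivity
        linarith
      have hzz : z ∈ Metric.closedBall (n:ℂ) (n/2) := hsub2 (hsub (Metric.mem_closedBall_self hδ0.le))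
      obtain ⟨F', hF', hF2⟩ := hasDerivAt_Ff r H k hr h hH A i (hre z hzz)
      have hdiff : DiffContOnCl ℂ (Ff r H k h A i) (Metric.ball z δ) := by
        apply DifferentiableOn.diffContOnCl
        rw [closure_ball _ hδ0.ne']
        intro y hy
        obtain ⟨G', hG', _⟩ := hasDerivAt_Ff r H k hr h hH A i (hre y (hsub2 (hsub hy)))
        exact hG'.differentiableAt.differentiableWithinAt
      have hc := Complex.norm_deriv_le_of_forall_mem_sphere_norm_le hδ0 hdiff
        (fun y hy => ih' y (hsub (Metric.sphere_subset_closedBall hy)))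
      rw [hF'.deriv] at hc
      rw [← hF2, norm_mul, norm_mul, Complex.norm_natCast]
      have hzn : ‖z‖ ≤ 3/2 * n := by
        rw [Metric.mem_closedBall, dist_eq_norm] at hzz
        have := norm_add_le (z - n) (n:ℂ)
        rw [sub_add_cancel, Complex.norm_natCast] at this
        linarith
      have hg := norm_gp_le H n hn hzn
      have hδ2 : M * (r * (2 * n : ℝ)^H * (2 * (I+1)))^i / δ ≤ M * (r * (2 * n : ℝ)^H * (2 * (I+1)))^i * (2 * (I+1)) := by
        rw [hδ, div_div_eq_mul_div]
        apply div_le_self _ hn0'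
        positivity
      calc r * ‖aeval z (gp H)‖ * ‖F'‖ ≤ r * (2 * n : ℝ)^H * (M * (r * (2 * n : ℝ)^H * (2 * (I+1)))^i * (2 * (I+1))) := by
            gcongr
            exact hc.trans hδ2
        _ = _ := by rw [pow_succ]; ring
  apply key i hi
  apply Metric.mem_closedBall_self
  have : (i:ℝ) ≤ I + 1 := by exact_mod_cast (by omega : i ≤ I+1)
  have := mul_le_mul_of_nonneg_right this hδ0.le
  linarith

/-- real version -/
noncomputable def alr (r h n : ℕ) : ℝ := Real.exp ((1/(r:ℝ)) * ∑ j ∈ Icc 1 h, Real.log (n + j))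

lemma al_nat (r h n : ℕ) : al r h n = (alr r h n : ℂ) := by
  unfold al alr
  push_cast
  congr 2
  apply sum_congr rfl
  intro j _
  have : ((n:ℂ) + j) = ((n + j : ℝ) : ℂ) := by push_cast; rfl
  rw [this]
  rw [Complex.ofReal_log (by positivity)]

lemma alr_one_le (r h n : ℕ) : 1 ≤ alr r h n := by
  unfold alr
  rw [Real.one_le_exp_iff]
  apply mul_nonneg (by positivity)
  apply sum_nonneg
  intro j hj
  simp only [mem_Icc] at hj
  apply Real.log_nonneg
  have : (1:ℝ) ≤ j := by exact_mod_cast hj.1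
  have : (0:ℝ) ≤ n := by positivity
  linarith

lemma alr_pow (r h n : ℕ) (hr : r ≠ 0) : alr r h n ^ r = ∏ j ∈ Icc 1 h, ((n:ℝ) + j) := by
  unfold alr
  rw [← Real.exp_nat_mul]
  have hr' : (r:ℝ) ≠ 0 := by exact_mod_cast hr
  rw [← mul_assoc, mul_one_div_cancel hr', one_mul, Real.exp_sum]
  apply prod_congr rfl
  intro j hj
  simp only [mem_Icc] at hj
  rw [Real.exp_log]
  have : (1:ℝ) ≤ j := by exact_mod_cast hj.1
  positivity

lemma alr_pow_mul_factorial (r h n : ℕ) (hr : r ≠ 0) :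
    alr r h n ^ r * (n.factorial : ℝ) = ((n+h).factorial : ℝ) := by
  rw [alr_pow r h n hr]
  induction h with
  | zero => simp
  | succ h ih =>
    rw [Finset.prod_Icc_succ_top (by omega)]
    rw [← add_assoc, Nat.factorial_succ]
    push_cast
    rw [← ih]
    ring
end PFact

namespace PFact
open Finset

lemma pigeon {E : Type*} [Fintype E] (K B Z : ℕ) (γ : E → ℕ → ℝ) (G τ : ℝ) (hτ : 0 < τ)
    (hG : ∀ e j, |γ e j| ≤ G) (hG0 : 0 ≤ G)
    (hZ : Fintype.card E * B * G / τ + 1 ≤ Z)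
    (hcard : (2 * Z + 1)^K < (B+1)^(Fintype.card E)) :
    ∃ a : E → ℤ, a ≠ 0 ∧ (∀ e, |a e| ≤ B) ∧ ∀ j < K, |∑ e, (a e : ℝ) * γ e j| ≤ τ := by
  classical
  let f : (E → Fin (B+1)) → (Fin K → ℤ) := fun a j => ⌊(∑ e, ((a e : ℕ) : ℝ) * γ e j) / τ⌋
  let T : Finset (Fin K → ℤ) := Fintype.piFinset (fun _ => Icc (-(Z:ℤ)) Z)
  have hmaps : ∀ a ∈ (univ : Finset (E → Fin (B+1))), f a ∈ T := by
    intro a _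
    simp only [T, Fintype.mem_piFinset, mem_Icc, f]
    intro j
    have h1 : |∑ e, ((a e : ℕ) : ℝ) * γ e j| ≤ Fintype.card E * B * G := by
      refine (abs_sum_le_sum_abs _ _).trans ?_
      calc ∑ e, |((a e : ℕ) : ℝ) * γ e j| ≤ ∑ e : E, (B:ℝ) * G := by
            apply sum_le_sum
            intro e _
            rw [abs_mul, Nat.abs_cast]
            have : ((a e : ℕ):ℝ) ≤ B := by exact_mod_cast (by have := (a e).2; omega : (a e : ℕ) ≤ B)
            gcongr
            exact hG e j
        _ = _ := by simp; ring
    have h2 : |(∑ e, ((a e : ℕ) : ℝ) * γ e j) / τ| ≤ (Z:ℝ) - 1 := by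
      rw [abs_div, abs_of_pos hτ]
      have : |∑ e, ((a e : ℕ) : ℝ) * γ e j| / τ ≤ Fintype.card E * B * G / τ := by gcongr
      linarith
    rw [abs_le] at h2
    constructor
    · apply Int.le_floor.mpr
      push_cast; linarith
    · apply Int.floor_le_iff.mpr
      push_cast; linarith
  have hlt : T.card < (univ : Finset (E → Fin (B+1))).card := by
    simp only [T, Fintype.card_piFinset, Int.card_Icc, prod_const, card_univ, Fintype.card_fin,
      Fintype.card_fun]
    have : ((Z:ℤ) + 1 - -(Z:ℤ)).toNat = 2 * Z + 1 := by omega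
    rw [this]
    exact hcard
  obtain ⟨a, _, b, _, hab, hf⟩ := exists_ne_map_eq_of_card_lt_of_maps_to hlt hmaps
  refine ⟨fun e => ((a e : ℕ) : ℤ) - ((b e : ℕ) : ℤ), ?_, ?_, ?_⟩
  · intro h0
    apply hab
    ext e
    have := congrFun h0 e
    simp only [Pi.zero_apply] at this
    omega
  · intro e
    have h1 := (a e).2
    have h2 := (b e).2
    change |((a e : ℕ) : ℤ) - ((b e : ℕ) : ℤ)| ≤ B
    rw [abs_le]
    constructor <;> omega
  · intro j hj
    have h1 := congrFun hf ⟨j, hj⟩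
    simp only [f] at h1
    have h2 := Int.abs_sub_lt_one_of_floor_eq_floor h1
    rw [← sub_div, abs_div, abs_of_pos hτ, div_lt_one hτ, ← sum_sub_distrib] at h2
    refine le_of_eq_of_le ?_ h2.le
    congr 1
    apply sum_congr rfl
    intro e _
    push_cast; ring

lemma iteratedDeriv_conj (φ : ℂ → ℂ) (R : ℝ)
    (hconj : ∀ w ∈ Metric.ball (0:ℂ) R, φ ((starRingEnd ℂ) w) = (starRingEnd ℂ) (φ w)) (n : ℕ) :
    ∀ w ∈ Metric.ball (0:ℂ) R,
      iteratedDeriv n φ ((starRingEnd ℂ) w) = (starRingEnd ℂ) (iteratedDeriv n φ w) := by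
  induction n with
  | zero => simpa using hconj
  | succ n ih =>
    intro w hw
    rw [iteratedDeriv_succ]
    have hev : iteratedDeriv n φ =ᶠ[nhds w] (starRingEnd ℂ) ∘ iteratedDeriv n φ ∘ (starRingEnd ℂ) := by
      filter_upwards [Metric.isOpen_ball.mem_nhds hw] with y hy
      simp [ih y hy]
    rw [hev.deriv_eq, deriv_conj_conj]
    simp

/-- Siegel type construction for analytic functions -/
lemma siegel_analytic {E : Type*} [Fintype E] (K B Z : ℕ) (φ : E → ℂ → ℂ) (R R₀ ρ G τ : ℝ)
    (hR : 0 < R) (hRR : R < R₀) (hρ : 0 < ρ) (hρR : ρ ≤ R / 2) (hτ : 0 < τ) (hG0 : 0 ≤ G)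
    (hdiff : ∀ e, DifferentiableOn ℂ (φ e) (Metric.ball 0 R₀))
    (hconj : ∀ e, ∀ w ∈ Metric.ball (0:ℂ) R₀, φ e ((starRingEnd ℂ) w) = (starRingEnd ℂ) (φ e w))
    (hG : ∀ e, ∀ w ∈ Metric.closedBall (0:ℂ) R, ‖φ e w‖ ≤ G)
    (hZ : Fintype.card E * B * G / τ + 1 ≤ Z)
    (hcard : (2 * Z + 1)^K < (B+1)^(Fintype.card E)) :
    ∃ a : E → ℤ, a ≠ 0 ∧ (∀ e, |a e| ≤ B) ∧ ∀ w : ℂ, ‖w‖ ≤ ρ →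
      ‖∑ e, (a e : ℂ) * φ e w‖ ≤ K * τ + 2 * (Fintype.card E * B * G) * (ρ / R)^K := by
  set c : E → ℕ → ℂ := fun e j => ((j.factorial : ℂ))⁻¹ * iteratedDeriv j (φ e) 0 with hc
  have hcnorm : ∀ e j, ‖c e j‖ ≤ G / R^j := by
    intro e j
    have h1 := Complex.norm_iteratedDeriv_le_of_forall_mem_sphere_norm_le (c := (0:ℂ)) (n := j) hR
      (f := φ e) (C := G) ?_ ?_
    · rw [hc]
      simp only [norm_mul, norm_inv, Complex.norm_natCast]
      have h2 : (0:ℝ) < j.factorial := by exact_mod_cast j.factorial_pos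
      calc ((j.factorial:ℝ))⁻¹ * ‖iteratedDeriv j (φ e) 0‖ ≤ ((j.factorial:ℝ))⁻¹ * (j.factorial * G / R^j) := by gcongr
        _ = _ := by field_simp
    · apply DifferentiableOn.diffContOnCl
      rw [closure_ball _ hR.ne']
      exact (hdiff e).mono (Metric.closedBall_subset_ball hRR)
    · intro z hz
      exact hG e z (Metric.sphere_subset_closedBall hz)
  have hcre : ∀ e j, c e j = ((c e j).re : ℂ) := by
    intro e j
    have h1 := iteratedDeriv_conj (φ e) R₀ (hconj e) j 0 (Metric.mem_ball_self (hR.trans hRR))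
    rw [map_zero] at h1
    have h2 : (starRingEnd ℂ) (c e j) = c e j := by
      simp only [hc, map_mul, map_inv₀, Complex.conj_natCast]
      rw [← h1]
    exact (Complex.conj_eq_iff_re.mp h2).symm
  have hρR1 : ρ / R ≤ 1 / 2 := by rw [div_le_iff₀ hR]; linarith
  have hρR0 : 0 < ρ / R := by positivity
  have hsum : ∀ e, ∀ w : ℂ, ‖w‖ ≤ ρ → HasSum (fun j => c e j * w^j) (φ e w) := by
    intro e w hw
    have h1 := Complex.hasSum_taylorSeries_on_ball (c := (0:ℂ)) (r := R) (f := φ e) (z := w)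
      ((hdiff e).mono (Metric.ball_subset_ball hRR.le)) (by
        rw [Metric.mem_ball, dist_zero_right]
        linarith)
    have h2 : (fun j => c e j * w^j) = fun n : ℕ => ((n.factorial : ℂ))⁻¹ • (w - 0) ^ n • iteratedDeriv n (φ e) 0 := by
      funext j
      simp only [hc, sub_zero, smul_eq_mul]
      ring
    rw [h2]
    exact h1
  obtain ⟨a, ha0, haB, haτ⟩ := pigeon K B Z (fun e j => (c e j).re * ρ^j) G τ hτ (by
    intro e j
    rw [abs_mul, abs_of_pos (pow_pos hρ j)]
    calc |(c e j).re| * ρ^j ≤ (G / R^j) * ρ^j := by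
          gcongr
          exact (Complex.abs_re_le_norm _).trans (hcnorm e j)
      _ = G * (ρ/R)^j := by rw [div_pow]; ring
      _ ≤ G * 1 := by
          gcongr
          apply pow_le_one₀ hρR0.le; linarith
      _ = G := mul_one _) hG0 hZ hcard
  refine ⟨a, ha0, haB, ?_⟩
  intro w hw
  have hs : HasSum (fun j => (∑ e, (a e : ℂ) * c e j) * w^j) (∑ e, (a e : ℂ) * φ e w) := by
    have : HasSum (fun j => ∑ e, (a e : ℂ) * (c e j * w^j)) (∑ e, (a e : ℂ) * φ e w) := by
      apply hasSum_sum
      intro e _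
      exact (hsum e w hw).mul_left _
    convert this using 2 with j
    rw [sum_mul]
    apply sum_congr rfl
    intro e _; ring
  have htail : ∀ j, ‖(∑ e, (a e : ℂ) * c e j) * w^j‖ ≤ (Fintype.card E * B * G) * (ρ/R)^j := by
    intro j
    rw [norm_mul, norm_pow]
    calc ‖∑ e, (a e : ℂ) * c e j‖ * ‖w‖^j ≤ (∑ e : E, (B:ℝ) * (G / R^j)) * ρ^j := by
          gcongr
          refine (norm_sum_le _ _).trans ?_
          apply sum_le_sum
          intro e _
          rw [norm_mul]
          gcongr
          · rw [Complex.norm_intCast]; exact_mod_cast haB e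
          · exact hcnorm e j
      _ = _ := by simp [div_pow]; ring
  have hhead : ∀ j < K, ‖(∑ e, (a e : ℂ) * c e j) * w^j‖ ≤ τ := by
    intro j hj
    have h1 := haτ j hj
    rw [norm_mul, norm_pow]
    have h2 : (∑ e, (a e : ℂ) * c e j) = ((∑ e, (a e : ℝ) * (c e j).re : ℝ) : ℂ) := by
      push_cast
      apply sum_congr rfl
      intro e _
      rw [← hcre]
    rw [h2, Complex.norm_real, Real.norm_eq_abs]
    calc _ ≤ |∑ e, (a e : ℝ) * (c e j).re| * ρ^j := by gcongr
      _ = |∑ e, (a e : ℝ) * ((c e j).re * ρ^j)| := by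
          rw [← abs_of_pos (pow_pos hρ j), ← abs_mul, sum_mul, abs_of_pos (pow_pos hρ j)]
          congr 1
          apply sum_congr rfl
          intro e _; ring
      _ ≤ τ := h1
  rw [← hs.tsum_eq, ← hs.summable.sum_add_tsum_nat_add K]
  refine (norm_add_le _ _).trans ?_
  apply add_le_add
  · refine (norm_sum_le _ _).trans ?_
    refine (sum_le_sum (fun j hj => hhead j (mem_range.mp hj))).trans ?_
    simp
  · have hgeo : HasSum (fun j => (Fintype.card E * B * G) * (ρ/R)^K * (ρ/R)^j) ((Fintype.card E * B * G) * (ρ/R)^K * (1 - ρ/R)⁻¹) :=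
      (hasSum_geometric_of_lt_one hρR0.le (by linarith)).mul_left _
    refine (tsum_of_norm_bounded hgeo (fun j => ?_)).trans ?_
    · refine (htail (j+K)).trans (le_of_eq ?_)
      rw [pow_add]; ring
    · have : (1 - ρ/R)⁻¹ ≤ 2 := by
        rw [inv_le_comm₀ (by linarith) (by norm_num)]
        linarith
      calc _ ≤ (Fintype.card E * B * G) * (ρ/R)^K * 2 := by gcongr
        _ = _ := by ring
end PFact

namespace PFact
open Polynomial Finset

/-- the algebraic function at infinity -/
noncomputable def be (r h : ℕ) (w : ℂ) : ℂ :=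
  Complex.exp ((1/(r:ℂ)) * ∑ j ∈ Icc 1 h, Complex.log (1 + j * w))

lemma al_eq_be (r m : ℕ) (hr : r ≠ 0) {z : ℂ} (hz : 0 < z.re) :
    al r (r * m) z = z^m * be r (r * m) z⁻¹ := by
  have hz0 : z ≠ 0 := by intro h; simp [h] at hz
  have hr' : (r:ℂ) ≠ 0 := by exact_mod_cast hr
  unfold al be
  have hlog : ∀ j ∈ Icc 1 (r*m), Complex.log (z + j) = Complex.log z + Complex.log (1 + j * z⁻¹) := by
    intro j _
    have hre : 0 < (1 + (j:ℂ) * z⁻¹).re := by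
      have : 0 < (z⁻¹).re := by
        rw [Complex.inv_re]; exact div_pos hz (Complex.normSq_pos.mpr hz0)
      simp only [Complex.add_re, Complex.one_re, Complex.mul_re, Complex.natCast_re, Complex.natCast_im, zero_mul, sub_zero]
      positivity
    have hne : (1 + (j:ℂ) * z⁻¹) ≠ 0 := by intro h; rw [h] at hre; simp at hre
    rw [← Complex.log_mul hz0 hne]
    · congr 1; field_simp
    · have h1 := abs_lt.mp (Complex.abs_arg_lt_pi_div_two_iff.mpr (Or.inl hz))
      have h2 := abs_lt.mp (Complex.abs_arg_lt_pi_div_two_iff.mpr (Or.inl hre))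
      constructor <;> linarith [h1.1, h1.2, h2.1, h2.2]
  rw [sum_congr rfl hlog, sum_add_distrib, mul_add, Complex.exp_add]
  congr 1
  simp only [sum_const, Nat.card_Icc, nsmul_eq_mul, add_tsub_cancel_right]
  rw [← mul_assoc]
  push_cast
  rw [← mul_assoc, one_div_mul_cancel hr', one_mul, Complex.exp_nat_mul, Complex.exp_log hz0]

lemma be_re (H j : ℕ) (hj : j ≤ H) {w : ℂ} (hw : ‖w‖ * H < 1) : 0 < (1 + (j:ℂ) * w).re := by
  simp only [Complex.add_re, Complex.one_re, Complex.mul_re, Complex.natCast_re, Complex.natCast_im, zero_mul, sub_zero]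
  have h1 : |(j:ℝ) * w.re| ≤ ‖w‖ * H := by
    rw [abs_mul, Nat.abs_cast, mul_comm]
    have : (j:ℝ) ≤ H := by exact_mod_cast hj
    exact mul_le_mul (Complex.abs_re_le_norm w) this (by positivity) (by positivity)
  have := (abs_le.mp h1).1
  linarith

lemma be_diff (r H h : ℕ) (hH : h ≤ H) {w : ℂ} (hw : ‖w‖ * H < 1) :
    DifferentiableAt ℂ (be r h) w := by
  unfold be
  apply DifferentiableAt.cexp
  apply DifferentiableAt.const_mul
  apply DifferentiableAt.fun_sum
  intro j hj
  simp only [mem_Icc] at hj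
  apply DifferentiableAt.clog (by fun_prop)
  exact Or.inl (be_re H j (hj.2.trans hH) hw)

lemma be_conj (r H h : ℕ) (hH : h ≤ H) {w : ℂ} (hw : ‖w‖ * H < 1) :
    be r h ((starRingEnd ℂ) w) = (starRingEnd ℂ) (be r h w) := by
  unfold be
  rw [← Complex.exp_conj]
  congr 1
  rw [map_mul, map_sum]
  congr 1
  · simp
  · apply sum_congr rfl
    intro j hj
    simp only [mem_Icc] at hj
    rw [← Complex.log_conj]
    · simp
    · have h2 := abs_lt.mp (Complex.abs_arg_lt_pi_div_two_iff.mpr (Or.inl (be_re H j (hj.2.trans hH) hw)))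
      have := Real.pi_pos
      intro h; rw [h] at h2; linarith [h2.2]

lemma be_bound (r H h : ℕ) (hr : r ≠ 0) (hH : h ≤ H) {w : ℂ} (hw : ‖w‖ * H < 1) :
    ‖be r h w‖ ≤ 2^H := by
  unfold be
  rw [Complex.norm_exp]
  have h1 : ((1/(r:ℂ)) * ∑ j ∈ Icc 1 h, Complex.log (1 + j * w)).re =
      (1/(r:ℝ)) * ∑ j ∈ Icc 1 h, Real.log ‖1 + j * w‖ := by
    have : (1/(r:ℂ)) = ((1/(r:ℝ) : ℝ) : ℂ) := by push_cast; rfl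
    rw [this, Complex.re_ofReal_mul, Complex.re_sum]
    simp only [Complex.log_re]
  rw [h1]
  have h2 : ∑ j ∈ Icc 1 h, Real.log ‖1 + j * w‖ ≤ H * Real.log 2 := by
    calc ∑ j ∈ Icc 1 h, Real.log ‖1 + j * w‖ ≤ ∑ j ∈ Icc 1 h, Real.log 2 := by
          apply sum_le_sum
          intro j hj
          simp only [mem_Icc] at hj
          have hre := be_re H j (hj.2.trans hH) hw
          apply Real.log_le_log
          · rw [norm_pos_iff]; intro h; rw [h] at hre; simp at hre
          · refine (norm_add_le _ _).trans ?_
            rw [norm_one, norm_mul, Complex.norm_natCast]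
            have : (j:ℝ) ≤ H := by exact_mod_cast hj.2.trans hH
            have : (j:ℝ) * ‖w‖ ≤ H * ‖w‖ := by gcongr
            linarith
      _ = h * Real.log 2 := by simp
      _ ≤ _ := by gcongr; 
  have h3 : (0:ℝ) < Real.log 2 := Real.log_pos (by norm_num)
  have h4 : (1/(r:ℝ)) ≤ 1 := by
    rw [div_le_one (by positivity)]
    exact_mod_cast Nat.one_le_iff_ne_zero.mpr hr
  have h5 : (1/(r:ℝ)) * ∑ j ∈ Icc 1 h, Real.log ‖1 + j * w‖ ≤ H * Real.log 2 := by
    calc _ ≤ (1/(r:ℝ)) * (H * Real.log 2) := by gcongr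
      _ ≤ 1 * (H * Real.log 2) := by gcongr
      _ = _ := one_mul _
  calc _ ≤ Real.exp (H * Real.log 2) := Real.exp_le_exp.mpr h5
    _ = 2^H := by rw [Real.exp_nat_mul, Real.exp_log (by norm_num)]

/-- polynomials from coefficients -/
noncomputable def Ap (D H k : ℕ) (m : Fin k → ℕ) (a : Fin k × Fin (D+1) → ℤ) (l : Fin k) : ℤ[X] :=
  ∑ d : Fin (D+1), C (a (l, d)) * X^(D + H - m l - d)

lemma Ap_eval (r D H k : ℕ) (hr : r ≠ 0) (m : Fin k → ℕ) (hm : ∀ l, m l ≤ H)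
    (a : Fin k × Fin (D+1) → ℤ) (l : Fin k) {z : ℂ} (hz : 0 < z.re) :
    aeval z (Ap D H k m a l) * al r (r * m l) z =
      z^(D+H) * ∑ d : Fin (D+1), (a (l,d) : ℂ) * ((z⁻¹)^(d:ℕ) * be r (r * m l) z⁻¹) := by
  have hz0 : z ≠ 0 := by intro h; simp [h] at hz
  unfold Ap
  rw [al_eq_be r (m l) hr hz, map_sum, sum_mul, mul_sum]
  apply sum_congr rfl
  intro d _
  have hml := hm l
  have hd := d.2
  have e : z^(D+H) = z^(D + H - m l - d) * z^(m l) * z^(d:ℕ) := by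
    rw [← pow_add, ← pow_add]; congr 1; omega
  rw [e]
  simp only [map_mul, map_pow, aeval_X, aeval_C]
  simp only [algebraMap_int_eq, eq_intCast]
  have e2 : z^(d:ℕ) * (z⁻¹)^(d:ℕ) = 1 := by rw [← mul_pow, mul_inv_cancel₀ hz0, one_pow]
  linear_combination (-((a (l,d) : ℂ) * z^(D + H - m l - d) * z^(m l) * be r (r * m l) z⁻¹)) * e2

lemma Ap_natDegree (D H k : ℕ) (m : Fin k → ℕ) (a : Fin k × Fin (D+1) → ℤ) (l : Fin k) :
    (Ap D H k m a l).natDegree ≤ D + H := by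
  unfold Ap
  apply natDegree_sum_le_of_forall_le
  intro d _
  refine (natDegree_C_mul_X_pow_le _ _).trans (by omega)

lemma Ap_ne_zero (D H k : ℕ) (m : Fin k → ℕ) (hm : ∀ l, m l ≤ H) (a : Fin k × Fin (D+1) → ℤ) (l : Fin k)
    (d : Fin (D+1)) (had : a (l,d) ≠ 0) : Ap D H k m a l ≠ 0 := by
  intro h
  apply had
  have h1 := congrArg (fun p => coeff p (D + H - m l - d)) h
  unfold Ap at h1
  simp only [finsetSum_coeff, coeff_C_mul, coeff_X_pow, coeff_zero] at h1
  rw [sum_eq_single d] at h1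
  · simpa using h1
  · intro b _ hb
    have hb2 : (b:ℕ) ≠ d := fun h => hb (Fin.ext h)
    have h1 := b.2
    have h2 := d.2
    have h3 := hm l
    rw [if_neg (by omega), mul_zero]
  · simp

/-- Construction of the auxiliary polynomials. -/
lemma construct (r H k D K B Z N : ℕ) (τ : ℝ) (hr : r ≠ 0) (hH1 : 1 ≤ H) (m : Fin k → ℕ)
    (hm : ∀ l, r * m l ≤ H) (hN : 8 * H ≤ N) (hτ : 0 < τ)
    (hZ : (k * (D+1) : ℕ) * B * 2^H / τ + 1 ≤ (Z : ℝ))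
    (hcard : (2 * Z + 1)^K < (B+1)^(k * (D+1))) :
    ∃ A : Fin k → ℤ[X], (∃ l, A l ≠ 0) ∧ (∀ l, (A l).natDegree ≤ D + H) ∧
      ∀ n : ℕ, N ≤ n → n < 2 * N → ∀ z ∈ Metric.closedBall (n:ℂ) (n/2),
        ‖∑ l, aeval z (A l) * al r (r * m l) z‖ ≤ (3 * N : ℝ)^(D+H) *
          (K * τ + 2 * ((k * (D+1) : ℕ) * B * 2^H) * (4 * H / N : ℝ)^K) ∧
        ∀ l, ‖aeval z (A l) * al r (r * m l) z‖ ≤ (3 * N : ℝ)^(D+H) * ((D+1 : ℕ) * (B * 2^H)) := by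
  have hH0 : (0:ℝ) < H := by exact_mod_cast hH1
  have hN0 : (0:ℝ) < N := by exact_mod_cast (by omega : 0 < N)
  have hNH : (8:ℝ) * H ≤ N := by exact_mod_cast hN
  have hm' : ∀ l, m l ≤ H := fun l => (Nat.le_mul_of_pos_left _ (Nat.pos_of_ne_zero hr)).trans (hm l)
  have hball : ∀ w ∈ Metric.ball (0:ℂ) (1/H : ℝ), ‖w‖ * H < 1 := by
    intro w hw
    rw [Metric.mem_ball, dist_zero_right, lt_div_iff₀ hH0] at hw
    exact hw
  have hlt : (1/(2*H) : ℝ) < 1/H := by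
    apply one_div_lt_one_div_of_lt hH0; linarith
  have hw1 : ∀ w : ℂ, ‖w‖ * H < 1 → ‖w‖ ≤ 1 := by
    intro w hw
    have : (1:ℝ) ≤ H := by exact_mod_cast hH1
    have := mul_le_mul_of_nonneg_left this (norm_nonneg w)
    linarith
  have hφb : ∀ (l : Fin k) (d : ℕ) (w : ℂ), ‖w‖ * H < 1 → ‖w^d * be r (r * m l) w‖ ≤ 2^H := by
    intro l d w hw
    rw [norm_mul, norm_pow]
    calc _ ≤ 1 * (2:ℝ)^H := by
          gcongr
          · exact pow_le_one₀ (norm_nonneg _) (hw1 w hw)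
          · exact be_bound r H _ hr (hm l) hw
      _ = _ := one_mul _
  have hcE : Fintype.card (Fin k × Fin (D+1)) = k * (D+1) := by simp
  obtain ⟨a, ha0, haB, haw⟩ := siegel_analytic (E := Fin k × Fin (D+1)) K B Z
    (fun e w => w^(e.2:ℕ) * be r (r * m e.1) w) (1/(2*H)) (1/H) (2/N) (2^H) τ (by positivity) hlt
    (by positivity) (by
      rw [div_le_iff₀ hN0]
      field_simp
      linarith) hτ (by positivity)
    (by
      intro e w hw
      apply DifferentiableAt.differentiableWithinAt
      exact (differentiableAt_id.pow _).mul (be_diff r H _ (hm e.1) (hball w hw)))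
    (by
      intro e w hw
      simp only [map_mul, map_pow]
      rw [be_conj r H _ (hm e.1) (hball w hw)])
    (by
      intro e w hw
      exact hφb _ _ _ (hball w (Metric.closedBall_subset_ball hlt hw)))
    (by rw [hcE]; exact hZ) (by rw [hcE]; exact hcard)
  rw [hcE] at haw
  refine ⟨Ap D H k m a, ?_, fun l => Ap_natDegree D H k m a l, ?_⟩
  · obtain ⟨⟨l, d⟩, had⟩ := Function.ne_iff.mp ha0
    exact ⟨l, Ap_ne_zero D H k m hm' a l d had⟩
  · intro n hn hn2 z hz
    have hnN : (N:ℝ) ≤ n := by exact_mod_cast hn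
    have hnN2 : (n:ℝ) ≤ 2 * N := by exact_mod_cast hn2.le
    rw [Metric.mem_closedBall, dist_eq_norm] at hz
    have hre : 0 < z.re := by
      have := (Complex.abs_re_le_norm (z - n)).trans hz
      simp only [Complex.sub_re, Complex.natCast_re] at this
      have := (abs_le.mp this).1
      linarith
    have hz0 : z ≠ 0 := by intro h; simp [h] at hre
    have hzn : ‖z‖ ≤ 3 * N := by
      have := norm_add_le (z - n) (n:ℂ)
      rw [sub_add_cancel, Complex.norm_natCast] at this
      linarith
    have hzl : (N:ℝ)/2 ≤ ‖z‖ := by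
      have := norm_sub_norm_le (n:ℂ) z
      rw [Complex.norm_natCast, norm_sub_rev] at this
      linarith
    have hzi : ‖z⁻¹‖ ≤ 2 / N := by
      rw [norm_inv, inv_le_comm₀ (by positivity) (by positivity), inv_div]
      exact hzl
    have hziH : ‖z⁻¹‖ * H < 1 := by
      calc ‖z⁻¹‖ * H ≤ 2 / N * H := by gcongr
        _ < 1 := by rw [div_mul_eq_mul_div, div_lt_one hN0]; linarith
    constructor
    · have e : ∑ l, aeval z (Ap D H k m a l) * al r (r * m l) z =
          z^(D+H) * ∑ e : Fin k × Fin (D+1), (a e : ℂ) * ((z⁻¹)^(e.2:ℕ) * be r (r * m e.1) z⁻¹) := by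
        rw [Fintype.sum_prod_type, mul_sum]
        apply sum_congr rfl
        intro l _
        exact Ap_eval r D H k hr m hm' a l hre
      rw [e, norm_mul, norm_pow]
      have hq : (2/N : ℝ) / (1/(2*H)) = 4 * H / N := by field_simp; ring
      have := haw z⁻¹ hzi
      rw [hq] at this
      gcongr
    · intro l
      rw [Ap_eval r D H k hr m hm' a l hre, norm_mul, norm_pow]
      gcongr
      refine (norm_sum_le _ _).trans ?_
      calc _ ≤ ∑ d : Fin (D+1), (B:ℝ) * 2^H := by
            apply sum_le_sum
            intro d _
            rw [norm_mul]
            gcongr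
            · rw [Complex.norm_intCast]; exact_mod_cast haB (l,d)
            · exact hφb l d _ hziH
        _ = _ := by simp
end PFact

namespace PFact
open Polynomial Finset

lemma lin_le_pow (c f N : ℕ) (h : 2 * c ≤ N) (hf : 1 ≤ f) : c * f ≤ N ^ f := by
  have h1 : f ≤ 2 ^ (f-1) := by
    have := Nat.lt_two_pow_self (n := f-1)
    omega
  calc c * f ≤ c * 2^(f-1) := by gcongr
    _ ≤ N * N^(f-1) := by
        rcases Nat.eq_zero_or_pos c with h0 | h0
        · simp [h0]
        · gcongr <;> omega
    _ = N^f := by rw [← pow_succ']; congr 1; omega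

set_option exponentiation.threshold 400 in
set_option maxHeartbeats 1000000 in
lemma aux_build (r H N f I : ℕ) (m : Fin 28 → ℕ) (hr : 2 ≤ r) (hrN : r ≤ N) (hH1 : 1 ≤ H)
    (hm : ∀ l, r * m l ≤ H) (hN3 : 3^90 ≤ N) (hHN : (4 * H)^30 ≤ N) (hIN : 2 * (I+1) ≤ N)
    (hf : H * (I + 1) ≤ f) :
    ∃ A : Fin 28 → ℤ[X], (∃ l, A l ≠ 0) ∧ (∀ l, (A l).natDegree ≤ 80 * f + H) ∧
      ∀ n : ℕ, N ≤ n → n < 2 * N → ∀ i ≤ I,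
        ‖Ff r H 28 (fun l => r * m l) A i n‖ * ((N:ℝ)^f)^150 ≤ 1 ∧
        ∀ l, |(((twi r H (r * m l) (A l) i).eval (n:ℤ) : ℤ) : ℝ)| * alr r (r * m l) n
          ≤ ((N:ℝ)^f)^130 := by
  obtain ⟨q, hq⟩ : ∃ q : ℕ, q = N^f := ⟨_, rfl⟩
  have hf1 : 1 ≤ f := le_trans (Nat.mul_pos hH1 (Nat.succ_pos I)) hf
  have hHf : H ≤ f := le_trans (Nat.le_mul_of_pos_right _ (Nat.succ_pos I)) hf
  have hN6 : 2 * (28 * 81) ≤ N := le_trans (by norm_num) hN3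
  have hNq : N ≤ q := by rw [hq]; exact Nat.le_self_pow (by omega) _
  have hq6 : 2 * (28 * 81) ≤ q := hN6.trans hNq
  have ha : 28 * (80 * f + 1) ≤ q := by
    have := lin_le_pow (28*81) f N hN6 hf1
    rw [hq]; omega
  have ha' : 300 * f ≤ q := by
    rw [hq]; exact lin_le_pow 300 f N (by omega) hf1
  have hb : 2^H ≤ q := by
    rw [hq]
    calc 2^H ≤ 2^f := Nat.pow_le_pow_right (by norm_num) hHf
      _ ≤ N^f := Nat.pow_le_pow_left (by omega) _
  have hc : (3 * N)^(80 * f + H) ≤ q^82 := by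
    have h3 : 3^(80 * f + H) ≤ q := by
      calc 3^(80 * f + H) ≤ 3^(90 * f) := Nat.pow_le_pow_right (by norm_num) (by omega)
        _ = (3^90)^f := pow_mul _ _ _
        _ ≤ q := by rw [hq]; exact Nat.pow_le_pow_left hN3 _
    have h4 : N^(80 * f + H) ≤ q^81 := by
      rw [hq, ← pow_mul]; exact Nat.pow_le_pow_right (by omega) (by omega)
    rw [mul_pow]
    calc 3^(80 * f + H) * N^(80 * f + H) ≤ q * q^81 := Nat.mul_le_mul h3 h4
      _ = q^82 := by ring
  have hd : (4 * H)^(300 * f) ≤ q^10 := by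
    calc (4 * H)^(300 * f) = ((4*H)^30)^(10 * f) := by rw [← pow_mul]; congr 1; ring
      _ ≤ N^(10 * f) := Nat.pow_le_pow_left hHN _
      _ = q^10 := by rw [hq, ← pow_mul]; congr 1; ring
  have hN0 : (0:ℝ) < N := by exact_mod_cast (by omega : 0 < N)
  have hq0 : (0:ℝ) < q := by exact_mod_cast (by omega : 0 < q)
  have hq2 : (2 * (28 * 81) : ℝ) ≤ q := by exact_mod_cast hq6
  have hbR : (2:ℝ)^H ≤ q := by exact_mod_cast hb
  have haR : ((28 * (80 * f + 1) : ℕ) : ℝ) ≤ q := by exact_mod_cast ha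
  have haR' : ((300 * f : ℕ) : ℝ) ≤ q := by exact_mod_cast ha'
  have hcR : (3 * N : ℝ)^(80 * f + H) ≤ (q:ℝ)^82 := by exact_mod_cast hc
  have hdR : (4 * H : ℝ)^(300 * f) ≤ (q:ℝ)^10 := by exact_mod_cast hd
  have hdR' : (4 * H / N : ℝ)^(300 * f) ≤ 1 / (q:ℝ)^290 := by
    rw [div_pow, div_le_div_iff₀ (by positivity) (by positivity)]
    have : (N:ℝ)^(300 * f) = q^300 := by
      rw [hq]; push_cast; rw [← pow_mul]; congr 1; ring
    rw [this]
    calc (4 * H : ℝ)^(300 * f) * q^290 ≤ q^10 * q^290 := by gcongr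
      _ = _ := by ring
  have hcount : (2 * q^284 + 1)^(300 * f) < (q^40+1)^(28 * (80 * f + 1)) := by
    have h1 : 2 * q^284 + 1 ≤ q^285 := by
      have : 1 ≤ q^284 := Nat.one_le_pow _ _ (by omega)
      calc 2 * q^284 + 1 ≤ 3 * q^284 := by omega
        _ ≤ q * q^284 := by gcongr; omega
        _ = q^285 := by ring
    calc (2 * q^284 + 1)^(300 * f) ≤ (q^285)^(300*f) := Nat.pow_le_pow_left h1 _
      _ = q^(85500*f) := by rw [← pow_mul]; congr 1; ring
      _ ≤ q^(40 * (28 * (80 * f + 1))) := Nat.pow_le_pow_right (by omega) (by omega)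
      _ = (q^40)^(28 * (80 * f + 1)) := pow_mul _ _ _
      _ < _ := Nat.pow_lt_pow_left (Nat.lt_succ_self _) (by omega)
  have h8H : 8 * H ≤ N := by
    calc 8 * H = 4 * H * 2 := by ring
      _ ≤ 4 * H * (4 * H) := Nat.mul_le_mul_left _ (by omega)
      _ = (4*H)^2 := by ring
      _ ≤ (4*H)^30 := Nat.pow_le_pow_right (by omega) (by norm_num)
      _ ≤ N := hHN
  have hbig : ((28 * (80 * f + 1) : ℕ) : ℝ) * ((q^40 : ℕ):ℝ) * 2^H ≤ q^42 := by
    push_cast at haR ⊢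
    calc (28 * (80 * (f:ℝ) + 1)) * (q:ℝ)^40 * 2^H ≤ q * q^40 * q := by gcongr
      _ = _ := by ring
  obtain ⟨A, hA0, hAd, hA⟩ := construct r H 28 (80*f) (300*f) (q^40) (q^284) N (1/(q:ℝ)^240)
    (by omega) hH1 m hm h8H (by positivity) (by
      rw [div_div_eq_mul_div, div_one]
      have : (1:ℝ) ≤ q^282 := one_le_pow₀ (by linarith)
      push_cast at hbig ⊢
      calc _ ≤ (q:ℝ)^42 * q^240 + 1 := by gcongr
        _ ≤ 2 * q^282 := by ring_nf; ring_nf at this; linarith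
        _ ≤ q * q^282 := by gcongr; linarith
        _ ≤ q * q^282 * q := le_mul_of_one_le_right (by positivity) (by linarith)
        _ = _ := by ring) hcount
  refine ⟨A, hA0, hAd, ?_⟩
  intro n hn1 hn2 i hi
  have hqN : ((N:ℝ)^f) = q := by rw [hq]; push_cast; rfl
  rw [hqN]
  have hov : (r * (2*n:ℝ)^H * (2*((I:ℝ)+1)))^i ≤ (q:ℝ)^5 := by
    have h1 : r * (2*n)^H * (2*(I+1)) ≤ N^(2 * H + 2) := by
      calc r * (2*n)^H * (2*(I+1)) ≤ N * (N^2)^H * N := by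
            gcongr
            calc 2 * n ≤ 4 * N := by omega
              _ ≤ N * N := Nat.mul_le_mul_right _ (by omega)
              _ = N^2 := (sq N).symm
        _ = _ := by rw [← pow_mul]; ring
    have h2 : (r * (2*n)^H * (2*(I+1)))^i ≤ q^5 := by
      calc _ ≤ (N^(2 * H + 2))^i := Nat.pow_le_pow_left h1 _
        _ = N^((2*H+2)*i) := (pow_mul _ _ _).symm
        _ ≤ N^(f*5) := Nat.pow_le_pow_right (by omega) (by
            calc (2*H+2)*i ≤ (5 * H) * (I+1) := Nat.mul_le_mul (by omega) (by omega)
              _ = (H * (I+1)) * 5 := by ring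
              _ ≤ f * 5 := Nat.mul_le_mul_right _ hf)
        _ = q^5 := by rw [hq, pow_mul]
    exact_mod_cast h2
  have hn0 : 0 < n := by omega
  constructor
  · have hM := Ff_bound r H 28 (by omega) (fun l => r * m l) hm A n I hn0 (by omega)
      (1/(q:ℝ)^155) (by
        intro z hz
        have h1 := (hA n hn1 hn2 z hz).1
        refine (le_trans (le_of_eq ?_) h1).trans ?_
        · unfold Ff; simp only [twi_zero]
        · have h2 : ((300 * f : ℕ) : ℝ) * (1/(q:ℝ)^240) ≤ q * (1/(q:ℝ)^240) := by gcongr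
          have h3 : 2 * (((28 * (80 * f + 1) : ℕ) : ℝ) * ((q^40 : ℕ):ℝ) * 2^H) *
            (4 * H / N : ℝ)^(300 * f) ≤ 2 * q^42 * (1/(q:ℝ)^290) := by gcongr
          calc _ ≤ (q:ℝ)^82 * (q * (1/(q:ℝ)^240) + 2 * q^42 * (1/(q:ℝ)^290)) := by
                gcongr
            _ = 1/(q:ℝ)^157 + 2/q^166 := by field_simp
            _ ≤ 1/(q:ℝ)^157 + 2/q^157 := by
                gcongr
                · linarith
                · norm_num
            _ = 3/(q:ℝ)^157 := by ring
            _ ≤ q^2/(q:ℝ)^157 := by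
                gcongr
                calc (3:ℝ) ≤ q := by linarith
                  _ ≤ q^2 := le_self_pow₀ (by linarith) (by norm_num)
            _ = _ := by field_simp) i hi
    calc _ ≤ (1/(q:ℝ)^155 * (r * (2*n:ℝ)^H * (2*((I:ℝ)+1)))^i) * q^150 := by gcongr
      _ ≤ (1/(q:ℝ)^155 * q^5) * q^150 := by gcongr
      _ = 1 := by field_simp
  · intro l
    have hM := Ff_bound r H 1 (by omega) (fun _ => r * m l) (fun _ => hm l) (fun _ => A l) n I hn0
      (by omega) ((q:ℝ)^124) (by
        intro z hz
        have h1 := (hA n hn1 hn2 z hz).2 l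
        refine (le_trans (le_of_eq ?_) h1).trans ?_
        · unfold Ff; simp [twi_zero]
        · have : (((80 * f + 1 : ℕ)):ℝ) ≤ q := by
            exact_mod_cast (by omega : 80 * f + 1 ≤ q)
          calc _ ≤ (q:ℝ)^82 * (q * (((q^40:ℕ):ℝ) * q)) := by gcongr
            _ = _ := by push_cast; ring) i hi
    have e : ‖Ff r H 1 (fun _ => r * m l) (fun _ => A l) i n‖ =
        |(((twi r H (r * m l) (A l) i).eval (n:ℤ) : ℤ) : ℝ)| * alr r (r * m l) n := by
      unfold Ff
      simp only [univ_unique, Fin.default_eq_zero, sum_const, card_singleton, one_smul]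
      rw [al_nat, norm_mul, Complex.norm_real, Real.norm_of_nonneg (by linarith [alr_one_le r (r * m l) n])]
      congr 1
      have : (aeval (n:ℂ)) (twi r H (r * m l) (A l) i) = (((twi r H (r * m l) (A l) i).eval (n:ℤ) : ℤ) : ℂ) := by
        have := aeval_algebraMap_apply ℂ (n:ℤ) (twi r H (r * m l) (A l) i)
        simpa using this
      rw [this, Complex.norm_intCast]
    rw [← e]
    calc _ ≤ (q:ℝ)^124 * (r * (2*n:ℝ)^H * (2*((I:ℝ)+1)))^i := hM
      _ ≤ (q:ℝ)^124 * q^5 := by gcongr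
      _ ≤ (q:ℝ)^124 * q^5 * q := le_mul_of_one_le_right (by positivity) (by linarith)
      _ = _ := by ring
end PFact

namespace PFact
open Polynomial Finset

lemma twi_of_zero (r H h i : ℕ) : twi r H h 0 i = 0 := by
  induction i with
  | zero => rfl
  | succ i ih => rw [twi_succ, ih]; simp [tw]

lemma eval_vanish (q Cst X F : ℝ) (t a x : Fin 28 → ℝ) (hq : 2 ≤ q) (hC0 : 0 ≤ Cst)
    (hC : 28 * Cst ≤ q)
    (hX1 : q^132 ≤ X) (hX2 : X ≤ q^148) (hF : F = ∑ l, t l * a l) (hFb : |F| * q^150 ≤ 1)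
    (ht : ∀ l, |t l| * a l ≤ q^130) (hx : ∀ l, |x l - a l * X| ≤ Cst * a l / X) :
    |∑ l, t l * x l| < 1 := by
  have hq0 : 0 < q := by linarith
  have hX0 : 0 < X := lt_of_lt_of_le (by positivity) hX1
  have e : ∑ l, t l * x l = X * F + ∑ l, t l * (x l - a l * X) := by
    rw [hF, mul_sum, ← sum_add_distrib]
    apply sum_congr rfl; intro l _; ring
  have h1 : |X * F| ≤ 1 / q^2 := by
    rw [abs_mul, abs_of_pos hX0, le_div_iff₀ (by positivity)]
    calc X * |F| * q^2 ≤ q^148 * |F| * q^2 := by gcongr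
      _ = |F| * q^150 := by ring
      _ ≤ 1 := hFb
  have h2 : |∑ l, t l * (x l - a l * X)| ≤ q / q^2 := by
    calc _ ≤ ∑ l, |t l * (x l - a l * X)| := abs_sum_le_sum_abs _ _
      _ ≤ ∑ l : Fin 28, Cst / q^2 := by
          apply sum_le_sum
          intro l _
          rw [abs_mul]
          calc |t l| * |x l - a l * X| ≤ |t l| * (Cst * a l / X) := by gcongr; exact hx l
            _ = Cst * (|t l| * a l) / X := by ring
            _ ≤ Cst * q^130 / q^132 := by
                gcongr
                exact ht l
            _ = Cst / q^2 := by field_simp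
      _ = (28 * Cst) / q^2 := by simp; ring
      _ ≤ _ := by gcongr
  have h3 : 1 / q^2 + q / q^2 < 1 := by
    rw [← add_div, div_lt_one (by positivity)]; nlinarith
  rw [e]
  exact lt_of_le_of_lt (abs_add_le _ _) (by linarith)

lemma core (r H N f I : ℕ) (m : Fin 28 → ℕ) (hr : 2 ≤ r) (hrN : r ≤ N) (hH1 : 1 ≤ H)
    (hm : ∀ l, r * m l ≤ H) (hminj : Function.Injective m)
    (hN3 : 3^90 ≤ N) (hHN : (4 * H)^30 ≤ N) (hIN : 2 * (I+1) ≤ N)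
    (hf : H * (I + 1) ≤ f) (Cst : ℝ) (hC0 : 0 ≤ Cst) (hC : 28 * Cst ≤ N)
    (S : Finset ℕ) (hS : ∀ n ∈ S, N ≤ n ∧ n < 2 * N) (x : ℕ → Fin 28 → ℕ) (X : ℕ → ℝ)
    (hX : ∀ n ∈ S, ((N:ℝ)^f)^132 ≤ X n ∧ X n ≤ ((N:ℝ)^f)^148)
    (hx : ∀ n ∈ S, ∀ l, 0 < x n l ∧
      |(x n l : ℝ) - alr r (r * m l) n * X n| ≤ Cst * alr r (r * m l) n / X n) :
    S.card * (I + 1 - 28) ≤ 28 * (80 * f + H + 28 * H) := by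
  classical
  obtain ⟨A, hA0, hAd, hA⟩ := aux_build r H N f I m hr hrN hH1 hm hN3 hHN hIN hf
  have hf1 : 1 ≤ f := le_trans (Nat.mul_pos hH1 (Nat.succ_pos I)) hf
  have hN2 : 2 ≤ N := le_trans (by norm_num) hN3
  have hNq : (N:ℝ) ≤ (N:ℝ)^f := le_self_pow₀ (by exact_mod_cast (by omega : 1 ≤ N)) (by omega)
  have hN2R : (2:ℝ) ≤ N := by exact_mod_cast hN2
  have van : ∀ n ∈ S, ∀ i ≤ I,
      ∑ l, (twi r H (r * m l) (A l) i).eval (n:ℤ) * (x n l : ℤ) = 0 := by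
    intro n hn i hi
    obtain ⟨b1, b2⟩ := hA n (hS n hn).1 (hS n hn).2 i hi
    have hFr : Ff r H 28 (fun l => r * m l) A i n =
        ((∑ l, (((twi r H (r * m l) (A l) i).eval (n:ℤ) : ℤ) : ℝ) * alr r (r * m l) n : ℝ) : ℂ) := by
      unfold Ff
      push_cast
      apply sum_congr rfl
      intro l _
      rw [al_nat]
      congr 1
      have := aeval_algebraMap_apply ℂ (n:ℤ) (twi r H (r * m l) (A l) i)
      simpa using this
    rw [hFr, Complex.norm_real, Real.norm_eq_abs] at b1
    have := eval_vanish ((N:ℝ)^f) Cst (X n) _ 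
      (fun l => (((twi r H (r * m l) (A l) i).eval (n:ℤ) : ℤ) : ℝ))
      (fun l => alr r (r * m l) n) (fun l => (x n l : ℝ)) (by linarith) hC0 (by linarith)
      (hX n hn).1 (hX n hn).2 rfl b1 b2 (fun l => (hx n hn l).2)
    rw [← Int.abs_lt_one_iff]
    exact_mod_cast this
  set T := univ.filter (fun l => A l ≠ 0) with hT
  have hk : T.card ≤ 28 := by simpa using card_le_univ T
  have hk0 : 0 < T.card := by
    obtain ⟨l, hl⟩ := hA0
    exact card_pos.2 ⟨l, by simp [hT, hl]⟩
  let g := T.orderEmbOfFin rfl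
  have hg : ∀ j, g j ∈ T := fun j => T.orderEmbOfFin_mem rfl j
  have key := zero_estimate r H T.card (80 * f + H) I hr (fun j => r * m (g j)) (fun j => A (g j))
    (by
      intro a b hab
      exact g.injective (hminj (Nat.eq_of_mul_eq_mul_left (by omega) hab)))
    (fun j => hm _) (fun j => by have := hg j; simpa [hT] using this) (fun j => hAd _) S
    (fun n j => (x n (g j) : ℤ))
    (by
      intro n hn h0
      have := congrFun h0 ⟨0, hk0⟩
      have h1 := (hx n hn (g ⟨0, hk0⟩)).1
      simp at this
      omega)
    (by
      intro n hn i hi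
      rw [← van n hn i hi]
      have e1 : ∑ j, (twi r H (r * m (g j)) (A (g j)) i).eval (n:ℤ) * (x n (g j) : ℤ) =
          ∑ l ∈ T, (twi r H (r * m l) (A l) i).eval (n:ℤ) * (x n l : ℤ) := by
        conv_rhs => rw [← T.map_orderEmbOfFin_univ rfl]
        rw [sum_map]
        rfl
      rw [e1, hT, sum_filter]
      apply sum_congr rfl
      intro l _
      split_ifs with h
      · rfl
      · push Not at h
        rw [h, twi_of_zero]; simp)
  calc S.card * (I + 1 - 28) ≤ S.card * (I + 1 - T.card) := Nat.mul_le_mul_left _ (by omega)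
    _ ≤ _ := key
    _ ≤ _ := Nat.mul_le_mul hk (by gcongr)
end PFact

namespace PFact
open Polynomial Finset

lemma poly_approx (P : ℤ[X]) (r : ℕ) (hr : 2 ≤ r) (hdeg : P.natDegree = r)
    (hcoeff : P.coeff (r - 1) = 0) :
    ∃ C0 : ℝ, 0 ≤ C0 ∧ ∀ x : ℕ, 0 < x →
      |((P.eval (x:ℤ) : ℤ) : ℝ) - P.leadingCoeff * (x:ℝ)^r| ≤ C0 * (x:ℝ)^(r-2) := by
  refine ⟨∑ i ∈ range (r-1), |(P.coeff i : ℝ)|, sum_nonneg (fun _ _ => abs_nonneg _), ?_⟩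
  intro x hx
  obtain ⟨t, rfl⟩ : ∃ t, r = t + 2 := ⟨r - 2, by omega⟩
  have h1 : t + 2 - 1 = t + 1 := rfl
  rw [h1] at hcoeff ⊢
  have e : ((P.eval (x:ℤ) : ℤ) : ℝ) - P.leadingCoeff * (x:ℝ)^(t+2) =
      ∑ i ∈ range (t+1), (P.coeff i : ℝ) * (x:ℝ)^i := by
    rw [eval_eq_sum_range, hdeg, sum_range_succ, sum_range_succ, hcoeff, leadingCoeff, hdeg]
    push_cast
    ring
  rw [e, sum_mul]
  refine (abs_sum_le_sum_abs _ _).trans (sum_le_sum ?_)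
  intro i hi
  rw [abs_mul, abs_pow, Nat.abs_cast]
  have : i ≤ t + 2 - 2 := by have := mem_range.1 hi; omega
  have hx1 : (1:ℝ) ≤ x := by exact_mod_cast hx
  gcongr

lemma pow_diff (y v : ℝ) (t : ℕ) (hy : 0 ≤ y) (hv : 0 ≤ v) :
    |y - v| * (max y v)^t ≤ |y^(t+1) - v^(t+1)| := by
  rcases le_total v y with h | h
  · rw [max_eq_left h, abs_of_nonneg (by linarith), abs_of_nonneg (by
      have := pow_le_pow_left₀ hv h (t+1); linarith)]
    have := pow_le_pow_left₀ hv h t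
    have := mul_le_mul_of_nonneg_left this hv
    rw [pow_succ, pow_succ]; linarith
  · rw [max_eq_right h, abs_of_nonpos (by linarith), abs_of_nonpos (by
      have := pow_le_pow_left₀ hy h (t+1); linarith)]
    have := pow_le_pow_left₀ hy h t
    have := mul_le_mul_of_nonneg_left this hy
    rw [pow_succ, pow_succ]; linarith

lemma approx_real (r : ℕ) (hr : 2 ≤ r) (a C0 x y α Px Py : ℝ) (ha : 1 ≤ |a|) (hC0 : 0 ≤ C0)
    (hx : 0 < x) (hy : 0 < y) (hα : 1 ≤ α) (hPx : |Px - a * x^r| ≤ C0 * x^(r-2))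
    (hPy : |Py - a * y^r| ≤ C0 * y^(r-2)) (hP : Py = α^r * Px) :
    |y - α * x| ≤ 2 * C0 * α / x := by
  obtain ⟨t, rfl⟩ : ∃ t, r = t + 2 := ⟨r - 2, by omega⟩
  have h2 : t + 2 - 2 = t := rfl
  rw [h2] at hPx hPy
  have hα0 : 0 < α := by linarith
  set v := α * x with hv
  have hv0 : 0 < v := by positivity
  set M := max y v with hM
  have hM0 : 0 < M := lt_of_lt_of_le hy (le_max_left _ _)
  have e : a * (y^(t+2) - v^(t+2)) = α^(t+2) * (Px - a * x^(t+2)) - (Py - a * y^(t+2)) := by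
    rw [hP, hv, mul_pow]; ring
  have h3 : |y^(t+2) - v^(t+2)| ≤ C0 * (2 * α^2) * M^t := by
    calc |y^(t+2) - v^(t+2)| ≤ |a| * |y^(t+2) - v^(t+2)| :=
          le_mul_of_one_le_left (abs_nonneg _) ha
      _ = |a * (y^(t+2) - v^(t+2))| := (abs_mul _ _).symm
      _ ≤ |α^(t+2) * (Px - a * x^(t+2))| + |Py - a * y^(t+2)| := by rw [e]; exact abs_sub _ _
      _ ≤ α^(t+2) * (C0 * x^t) + C0 * y^t := by
          rw [abs_mul, abs_of_pos (by positivity : 0 < α^(t+2))]; gcongr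
      _ = C0 * (α^2 * v^t + 1 * y^t) := by rw [hv, mul_pow]; ring
      _ ≤ C0 * (α^2 * M^t + α^2 * M^t) := by
          gcongr
          · exact le_max_right _ _
          · exact one_le_pow₀ hα
          · exact le_max_left _ _
      _ = _ := by ring
  have h4 := (pow_diff y v (t+1) hy.le hv0.le).trans h3
  have h5 : |y - v| * M ≤ C0 * (2 * α^2) := by
    have : (|y - v| * M) * M^t ≤ C0 * (2 * α^2) * M^t := by
      calc _ = |y - v| * M^(t+1) := by ring
        _ ≤ _ := h4
    exact le_of_mul_le_mul_right this (by positivity)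
  rw [le_div_iff₀ hx]
  have h6 : |y - v| * v ≤ C0 * (2 * α^2) :=
    le_trans (by gcongr; exact le_max_right _ _) h5
  have h7 : (|y - v| * x) * α ≤ (2 * C0 * α) * α := by
    rw [hv] at h6 ⊢; nlinarith
  exact le_of_mul_le_mul_right h7 hα0

lemma size_real (r : ℕ) (hr : 2 ≤ r) (a C0 s F Px : ℝ) (ha : 1 ≤ |a|) (hC0 : 0 ≤ C0) 
    (hs : 1 ≤ |s|) (hF : 1 ≤ F) (x : ℝ) (hx : 1 ≤ x) (hPx : |Px - a * x^r| ≤ C0 * x^(r-2))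
    (hP : s * F = Px) :
    F ≤ (|a| + C0) * x^r ∧ x^r ≤ (2 * |s| + (2 * C0 + 1)^r) * F := by
  have hx0 : 0 < x := by linarith
  have h1 : x^(r-2) ≤ x^r := pow_le_pow_right₀ hx (by omega)
  have hab : |Px| = |s| * F := by rw [← hP, abs_mul, abs_of_pos (by linarith : 0 < F)]
  have hax : |a * x^r| = |a| * x^r := by rw [abs_mul, abs_of_pos (by positivity : 0 < x^r)]
  have hxr : 0 < x^r := by positivity
  constructor
  · have h2 : |Px| ≤ |Px - a * x^r| + |a * x^r| := by
      have := abs_add_le (Px - a * x^r) (a * x^r); simpa using this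
    rw [hab, hax] at h2
    have : C0 * x^(r-2) ≤ C0 * x^r := by gcongr
    nlinarith
  · have h2 : |a * x^r| ≤ |Px - a * x^r| + |Px| := by
      have := abs_sub Px (Px - a * x^r); 
      rw [sub_sub_cancel] at this; linarith
    rw [hab, hax] at h2
    rcases le_total (2 * C0) (x^2) with h | h
    · have h3 : x^r = x^2 * x^(r-2) := by rw [← pow_add]; congr 1; omega
      have h4 : 2 * C0 * x^(r-2) ≤ x^2 * x^(r-2) := by gcongr
      have h5 : x^r ≤ |a| * x^r := le_mul_of_one_le_left hxr.le ha
      have h6 : 0 ≤ (2 * C0 + 1)^r * F := by positivity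
      rw [← h3] at h4
      nlinarith
    · have h3 : x ≤ 2 * C0 + 1 := by nlinarith
      have h4 : x^r ≤ (2 * C0 + 1)^r := by gcongr
      have h5 : (2 * C0 + 1)^r ≤ (2 * C0 + 1)^r * F := le_mul_of_one_le_right (by positivity) hF
      have h6 : 0 ≤ 2 * |s| * F := by positivity
      nlinarith

lemma size_nat (r f n : ℕ) (hr : 2 ≤ r) (hf : 146 ≤ f) (hf2 : n ≤ 145 * r * (f+1)) :
    n ≤ 290 * (r * f) ∧ 1 + r * f + 145 * r * (f+1) ≤ f * 148 * r ∧
    r * f + 1 + 132 * (r * f) < 140 * r * f := by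
  obtain ⟨p, hp⟩ : ∃ p, p = r * f := ⟨_, rfl⟩
  have h1 : 146 * r ≤ p := by rw [hp, mul_comm]; exact Nat.mul_le_mul_left _ hf
  have e1 : 145 * r * (f+1) = 145 * p + 145 * r := by rw [hp]; ring
  have e2 : f * 148 * r = 148 * p := by rw [hp]; ring
  have e3 : 140 * r * f = 140 * p := by rw [hp]; ring
  rw [e1] at hf2 ⊢
  rw [e2, e3, ← hp]
  omega

set_option exponentiation.threshold 400 in
lemma size_window (r N f n x : ℕ) (C1 C3 : ℝ) (hr : 2 ≤ r) (hN : 3^290 ≤ N) (hf : 146 ≤ f)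
    (hC1 : 0 < C1) (hC3 : 0 < C3) (hC1N : C1 ≤ N) (hC3N : C3 ≤ N)
    (hn1 : N ≤ n) (hn2 : n < 2 * N) (hf1 : 140 * r * f ≤ n) (hf2 : n ≤ 145 * r * (f+1))
    (h1 : (n.factorial : ℝ) ≤ C1 * (x:ℝ)^r) (h2 : (x:ℝ)^r ≤ C3 * n.factorial) :
    ((N:ℝ)^f)^132 ≤ x ∧ (x:ℝ) ≤ ((N:ℝ)^f)^148 := by
  have hNR : (3:ℝ)^290 ≤ N := by exact_mod_cast hN
  have hN2 : (1:ℝ) < N := lt_of_lt_of_le (one_lt_pow₀ (by norm_num) (by norm_num)) hNR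
  have hN1 : (1:ℝ) ≤ N := hN2.le
  have hN0 : (0:ℝ) < N := lt_trans one_pos hN2
  obtain ⟨hn290, hn148, hn140⟩ := size_nat r f n hr hf hf2
  have h3n : (3:ℝ)^n ≤ (N:ℝ)^(r*f) := by
    calc (3:ℝ)^n ≤ 3^(290 * (r * f)) := pow_le_pow_right₀ (by norm_num) hn290
      _ = (3^290)^(r*f) := pow_mul _ _ _
      _ ≤ _ := by gcongr
  constructor
  · have h4 : (N:ℝ)^n ≤ 3^n * n.factorial := by
      have h5 := Real.pow_div_factorial_le_exp (n:ℝ) (by positivity) n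
      rw [div_le_iff₀ (by positivity)] at h5
      calc (N:ℝ)^n ≤ (n:ℝ)^n := by gcongr
        _ ≤ _ := h5
        _ ≤ _ := by
          gcongr
          rw [← Real.exp_one_pow]
          gcongr
          linarith [Real.exp_one_lt_d9]
    by_contra hlt
    push Not at hlt
    have h6 : (x:ℝ)^r ≤ (((N:ℝ)^f)^132)^r := by gcongr
    have h7 : (N:ℝ)^(140 * r * f) ≤ (N:ℝ)^(r*f + 1 + 132 * (r*f)) := by
      calc (N:ℝ)^(140 * r * f) ≤ (N:ℝ)^n := pow_le_pow_right₀ hN1 hf1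
        _ ≤ 3^n * n.factorial := h4
        _ ≤ (N:ℝ)^(r*f) * (N * (((N:ℝ)^f)^132)^r) := by
            gcongr
            exact h1.trans (by gcongr)
        _ = _ := by rw [← pow_mul, ← pow_mul, pow_add, pow_add, pow_one, mul_assoc]; congr 3; ring
    have h8 := (pow_le_pow_iff_right₀ hN2).1 h7
    exact absurd h8 (not_le.2 hn140)
  · have h4 : (n.factorial : ℝ) ≤ 3^n * (N:ℝ)^n := by
      calc (n.factorial : ℝ) ≤ (n:ℝ)^n := by exact_mod_cast Nat.factorial_le_pow n
        _ ≤ (3 * N : ℝ)^n := by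
          gcongr
          exact_mod_cast (by omega : n ≤ 3 * N)
        _ = _ := mul_pow _ _ _
    have h5 : (x:ℝ)^r ≤ (((N:ℝ)^f)^148)^r := by
      calc (x:ℝ)^r ≤ N * (N^(r*f) * (N:ℝ)^(145 * r * (f+1))) := by
            refine h2.trans ?_
            gcongr
            refine h4.trans ?_
            gcongr
        _ = (N:ℝ)^(1 + r * f + 145 * r * (f+1)) := by
            rw [pow_add, pow_add, pow_one]; exact (mul_assoc _ _ _).symm
        _ ≤ (N:ℝ)^(f * 148 * r) := by
            apply pow_le_pow_right₀ hN1
            exact hn148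
        _ = _ := by rw [pow_mul, pow_mul]
    exact le_of_pow_le_pow_left₀ (by omega) (by positivity) h5
end PFact

namespace PFact
open Polynomial Finset

lemma arith (P : ℤ[X]) (r : ℕ) (hr : 2 ≤ r) (hdeg : P.natDegree = r)
    (hcoeff : P.coeff (r - 1) = 0) (s : ℤ) (hs : s ≠ 0) :
    ∃ K0 : ℕ, (∀ n x : ℕ, 0 < x → s * (n.factorial : ℤ) = P.eval (x : ℤ) →
        (n.factorial : ℝ) ≤ K0 * (x:ℝ)^r ∧ (x:ℝ)^r ≤ K0 * n.factorial) ∧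
      ∀ n h x y : ℕ, 0 < x → 0 < y → s * (n.factorial : ℤ) = P.eval (x : ℤ) →
        s * ((n+h).factorial : ℤ) = P.eval (y : ℤ) →
        |(y:ℝ) - alr r h n * x| ≤ K0 * alr r h n / x := by
  obtain ⟨C0, hC0, hP⟩ := poly_approx P r hr hdeg hcoeff
  have ha : (1:ℝ) ≤ |(P.leadingCoeff : ℝ)| := by
    have : P.leadingCoeff ≠ 0 := by
      rw [Ne, leadingCoeff_eq_zero]; rintro rfl; simp at hdeg; omega
    exact_mod_cast Int.one_le_abs this
  have hs1 : (1:ℝ) ≤ |(s:ℝ)| := by exact_mod_cast Int.one_le_abs hs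
  set C1 := |(P.leadingCoeff : ℝ)| + C0
  set C3 := 2 * |(s:ℝ)| + (2 * C0 + 1)^r
  obtain ⟨K1, hK1⟩ := exists_nat_ge C1
  obtain ⟨K2, hK2⟩ := exists_nat_ge C3
  obtain ⟨K3, hK3⟩ := exists_nat_ge (2 * C0)
  have hk1 : C1 ≤ ((K1 + K2 + K3 : ℕ) : ℝ) := by
    push_cast; linarith [Nat.cast_nonneg (α := ℝ) K2, Nat.cast_nonneg (α := ℝ) K3]
  have hk2 : C3 ≤ ((K1 + K2 + K3 : ℕ) : ℝ) := by
    push_cast; linarith [Nat.cast_nonneg (α := ℝ) K1, Nat.cast_nonneg (α := ℝ) K3]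
  have hk3 : 2 * C0 ≤ ((K1 + K2 + K3 : ℕ) : ℝ) := by
    push_cast; linarith [Nat.cast_nonneg (α := ℝ) K1, Nat.cast_nonneg (α := ℝ) K2]
  refine ⟨K1 + K2 + K3, ?_, ?_⟩
  · intro n x hx he
    have he' : (s:ℝ) * n.factorial = ((P.eval (x:ℤ) : ℤ) : ℝ) := by rw [← he]; push_cast; rfl
    obtain ⟨h1, h2⟩ := size_real r hr P.leadingCoeff C0 s n.factorial _ ha hC0 hs1
      (by exact_mod_cast Nat.one_le_iff_ne_zero.2 (Nat.factorial_ne_zero n)) x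
      (by exact_mod_cast hx) (hP x hx) he'
    exact ⟨h1.trans (by gcongr), h2.trans (by gcongr)⟩
  · intro n h x y hx hy he1 he2
    have he1' : (s:ℝ) * n.factorial = ((P.eval (x:ℤ) : ℤ) : ℝ) := by rw [← he1]; push_cast; rfl
    have he2' : (s:ℝ) * (n+h).factorial = ((P.eval (y:ℤ) : ℤ) : ℝ) := by rw [← he2]; push_cast; rfl
    have hα := alr_one_le r h n
    have hf := alr_pow_mul_factorial r h n (by omega)
    have := approx_real r hr P.leadingCoeff C0 x y (alr r h n) _ _ ha hC0 (by exact_mod_cast hx)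
      (by exact_mod_cast hy) hα (hP x hx) (hP y hy) (by
        rw [← he1', ← he2', ← hf]; ring)
    have h0 : 0 ≤ alr r h n := by linarith
    exact this.trans (by gcongr)

lemma few_bad (r W N : ℕ) (hr : 1 ≤ r) (hW : 1 ≤ W) (Sg B : Finset ℕ)
    (hBS : B ⊆ Sg) (hB : ∀ n ∈ B, N ≤ n ∧ n < 2 * N)
    (hbad : ∀ n ∈ B, ¬ ∃ m : Fin 28 → ℕ, Function.Injective m ∧ m 0 = 0 ∧ (∀ l, r * m l < W) ∧
      ∀ l, n + r * m l ∈ Sg) :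
    B.card ≤ (N / W + 1) * r * 27 := by
  by_contra hlt
  push Not at hlt
  have hmaps : ∀ n ∈ B, ((n - N) / W, n % r) ∈ range (N / W + 1) ×ˢ range r := by
    intro n hn
    obtain ⟨h1, h2⟩ := hB n hn
    rw [mem_product, mem_range, mem_range]
    refine ⟨?_, Nat.mod_lt _ hr⟩
    have : (n - N) / W ≤ N / W := Nat.div_le_div_right (by omega)
    exact Nat.lt_succ_of_le this
  obtain ⟨y, _, hy⟩ := exists_lt_card_fiber_of_mul_lt_card_of_maps_to hmaps (n := 27) (by
    rw [card_product, card_range, card_range]; exact hlt)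
  obtain ⟨T, hT, hTc⟩ := exists_subset_card_eq (Nat.succ_le_of_lt hy)
  let g := T.orderEmbOfFin hTc
  have hg : ∀ l, g l ∈ B ∧ (g l - N) / W = y.1 ∧ g l % r = y.2 := by
    intro l
    have := hT (T.orderEmbOfFin_mem hTc l)
    rw [mem_filter] at this
    refine ⟨this.1, ?_, ?_⟩
    · rw [← this.2]
    · rw [← this.2]
  have hle : ∀ l, g 0 ≤ g l := fun l => g.monotone (Fin.zero_le l)
  have hdiv : ∀ l, r * ((g l - g 0) / r) = g l - g 0 := by
    intro l
    apply Nat.mul_div_cancel'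
    apply (Nat.modEq_iff_dvd' (hle l)).1
    show g 0 % r = g l % r
    rw [(hg 0).2.2, (hg l).2.2]
  refine hbad (g 0) (hg 0).1 ⟨fun l => (g l - g 0) / r, ?_, ?_, ?_, ?_⟩
  · intro a b hab
    have h1 := hdiv a
    have h2 := hdiv b
    simp only at hab
    rw [hab, h2] at h1
    have := hle a
    have := hle b
    exact g.injective (by omega)
  · simp
  · intro l
    rw [hdiv]
    have h1 := (hg l).2.1
    have h0 := (hg 0).2.1
    have b1 := hB _ (hg l).1
    have b0 := hB _ (hg 0).1
    have h2 := Nat.div_add_mod (g l - N) W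
    have h3 := Nat.div_add_mod (g 0 - N) W
    have h4 := Nat.mod_lt (g l - N) hW
    rw [h1] at h2
    rw [h0] at h3
    omega
  · intro l
    rw [hdiv]
    have h5 : g 0 + (g l - g 0) = g l := by have := hle l; omega
    rw [h5]
    exact hBS (hg l).1

lemma comb (r W N M : ℕ) (hr : 1 ≤ r) (hW : 1 ≤ W) (Sg : Finset ℕ)
    (hSg : ∀ n ∈ Sg, N ≤ n ∧ n < 2 * N)
    (hbig : W^28 * 28 * M + (N / W + 1) * r * 27 < Sg.card) :
    ∃ m : Fin 28 → ℕ, Function.Injective m ∧ m 0 = 0 ∧ (∀ l, r * m l ≤ W) ∧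
      ∃ S : Finset ℕ, M < S.card ∧ (∀ n ∈ S, ∀ l, n + r * m l ∈ Sg) ∧
        ∀ n ∈ S, ∀ n' ∈ S, 28 * n ≤ 28 * n' + N := by
  classical
  let good : ℕ → Prop := fun n => ∃ m : Fin 28 → ℕ, Function.Injective m ∧ m 0 = 0 ∧
    (∀ l, r * m l < W) ∧ ∀ l, n + r * m l ∈ Sg
  have hb := few_bad r W N hr hW Sg (Sg.filter (fun n => ¬ good n)) (filter_subset _ _)
    (fun n hn => hSg n (mem_filter.1 hn).1) (fun n hn => (mem_filter.1 hn).2)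
  have hsum := card_filter_add_card_filter_not (s := Sg) good
  have hG : W^28 * 28 * M < (Sg.filter good).card := by omega
  let mm : ℕ → Fin 28 → ℕ := fun n => if h : good n then h.choose else 0
  have hmm : ∀ n, good n → Function.Injective (mm n) ∧ mm n 0 = 0 ∧
    (∀ l, r * mm n l < W) ∧ ∀ l, n + r * mm n l ∈ Sg := by
    intro n hn
    have : mm n = hn.choose := dif_pos hn
    rw [this]
    exact hn.choose_spec
  have hmaps : ∀ n ∈ Sg.filter good, (mm n, 28 * (n - N) / N) ∈
      (Fintype.piFinset (fun _ : Fin 28 => range W)) ×ˢ range 28 := by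
    intro n hn
    obtain ⟨h1, h2⟩ := mem_filter.1 hn
    obtain ⟨b1, b2⟩ := hSg n h1
    rw [mem_product, Fintype.mem_piFinset, mem_range]
    constructor
    · intro l
      rw [mem_range]
      exact lt_of_le_of_lt (Nat.le_mul_of_pos_left _ hr) ((hmm n h2).2.2.1 l)
    · rw [Nat.div_lt_iff_lt_mul (by omega)]
      show 28 * (n - N) < 28 * N
      omega
  obtain ⟨y, _, hy⟩ := exists_lt_card_fiber_of_mul_lt_card_of_maps_to hmaps (n := M) (by
    rw [card_product, Fintype.card_piFinset]; simpa using hG)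
  set S := {n ∈ Sg.filter good | (mm n, 28 * (n - N) / N) = y} with hS
  have hSm : ∀ n ∈ S, n ∈ Sg ∧ good n ∧ mm n = y.1 ∧ 28 * (n - N) / N = y.2 := by
    intro n hn
    rw [hS, mem_filter, mem_filter] at hn
    exact ⟨hn.1.1, hn.1.2, by rw [← hn.2], by rw [← hn.2]⟩
  obtain ⟨n0, hn0⟩ := card_pos.1 (lt_of_le_of_lt (Nat.zero_le M) hy)
  obtain ⟨_, g0, e0, _⟩ := hSm n0 hn0
  have h0 := hmm n0 g0
  rw [e0] at h0
  refine ⟨y.1, h0.1, h0.2.1, fun l => (h0.2.2.1 l).le, S, hy, ?_, ?_⟩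
  · intro n hn l
    obtain ⟨_, g1, e1, _⟩ := hSm n hn
    have := (hmm n g1).2.2.2 l
    rwa [e1] at this
  · intro n hn n' hn'
    obtain ⟨a1, _, _, e1⟩ := hSm n hn
    obtain ⟨a2, _, _, e2⟩ := hSm n' hn'
    have b1 := hSg n a1
    have b2 := hSg n' a2
    have h2 := Nat.div_add_mod (28 * (n - N)) N
    have h3 := Nat.div_add_mod (28 * (n' - N)) N
    have h4 := Nat.mod_lt (28 * (n - N)) (by omega : N > 0)
    rw [e1] at h2
    rw [e2] at h3
    omega
end PFact

namespace PFact
open Polynomial Finset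

/-- the elementary inequalities between the parameters -/
lemma params (r w N ns f J K0 : ℕ) (hr : 2 ≤ r) (hw1 : 140 * r * 2^41 ≤ w) (hw2 : 28 * K0 ≤ w)
    (hwN : w^34 ≤ N) (hNw : N ≤ 2^34 * w^34) (hns : N ≤ ns) (hf : f = ns / (140 * r))
    (hns2 : ns < 2 * N) (hJ : J = 56 * 2^34 * w^29 + 1) :
    (4 * w)^30 ≤ N ∧ 2 * (27 + J + 1) ≤ N ∧ w * (27 + J + 1) ≤ f ∧ w ≤ N ∧ 146 ≤ f ∧
      28 * (80 * f + w + 28 * w) ≤ 56 * N ∧ 56 * N < w^5 * J := by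
  have hw0 : 140 * 2 * 2^41 ≤ w := le_trans (by gcongr) hw1
  have hwbig : 2^41 ≤ w := le_trans (by norm_num) hw0
  have hw1' : 1 ≤ w := le_trans (by norm_num) hwbig
  have h30 : w^31 ≤ N := le_trans (Nat.pow_le_pow_right hw1' (by norm_num)) hwN
  have h29 : 1 ≤ w^29 := Nat.one_le_pow _ _ hw1'
  have hJ2 : 27 + J + 1 ≤ 2^41 * w^29 := by omega
  have hwJ : w * (27 + J + 1) * (140 * r) ≤ N := by
    calc w * (27 + J + 1) * (140 * r) ≤ w * (2^41 * w^29) * (140 * r) := by gcongr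
      _ = w^30 * (140 * r * 2^41) := by ring
      _ ≤ w^30 * w := by gcongr
      _ = w^31 := by ring
      _ ≤ N := h30
  have hf1 : w * (27 + J + 1) ≤ f := by
    rw [hf, Nat.le_div_iff_mul_le (by omega)]
    exact hwJ.trans hns
  have hww : w ≤ w * (27 + J + 1) := Nat.le_mul_of_pos_right _ (by omega)
  have hwN' : w ≤ N := by
    calc w = w^1 := (pow_one w).symm
      _ ≤ w^31 := Nat.pow_le_pow_right hw1' (by norm_num)
      _ ≤ N := h30
  refine ⟨?_, ?_, hf1, hwN', ?_, ?_, ?_⟩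
  · calc (4 * w)^30 = w^30 * 2^60 := by ring
      _ ≤ w^30 * (2^41 * 2^41) := by gcongr; norm_num
      _ ≤ w^30 * (w * w) := by gcongr
      _ = w^32 := by ring
      _ ≤ w^34 := Nat.pow_le_pow_right hw1' (by norm_num)
      _ ≤ N := hwN
  · calc 2 * (27 + J + 1) ≤ w * (27 + J + 1) := by gcongr; omega
      _ ≤ w * (27 + J + 1) * (140 * r) := Nat.le_mul_of_pos_right _ (by omega)
      _ ≤ N := hwJ
  · exact le_trans (by omega) (hww.trans hf1)
  · have h280 : f * 280 ≤ ns := by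
      calc f * 280 ≤ f * (140 * r) := by gcongr; omega
        _ ≤ ns := by rw [hf]; exact Nat.div_mul_le_self _ _
    have h29w : 280 * w ≤ N := by
      calc 280 * w ≤ w * w := by gcongr; omega
        _ = w^2 := (sq w).symm
        _ ≤ w^31 := Nat.pow_le_pow_right hw1' (by norm_num)
        _ ≤ N := h30
    omega
  · calc 56 * N ≤ 56 * (2^34 * w^34) := by gcongr
      _ < 56 * (2^34 * w^34) + w^5 := Nat.lt_add_of_pos_right (by positivity)
      _ = w^5 * J := by rw [hJ]; ring

lemma wsplit (a b T w : ℕ) (h : a + b + T ≤ w) : a ≤ w ∧ b ≤ w ∧ T ≤ w := by omega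

set_option exponentiation.threshold 400 in
lemma main_nat (P : ℤ[X]) (r : ℕ) (hr : 2 ≤ r) (hdeg : P.natDegree = r)
    (hcoeff : P.coeff (r - 1) = 0) (s : ℤ) (hs : s ≠ 0) :
    ∃ w0 : ℕ, ∀ w N : ℕ, w0 ≤ w → w^34 ≤ N → N ≤ 2^34 * w^34 → ∀ Sg : Finset ℕ,
      (∀ n ∈ Sg, (N ≤ n ∧ n < 2 * N) ∧ ∃ x : ℕ, 0 < x ∧ s * (n.factorial : ℤ) = P.eval (x:ℤ)) →
      Sg.card ≤ w^28 * 28 * w^5 + (N / w + 1) * r * 27 := by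
  classical
  obtain ⟨K0, hK1, hK2⟩ := arith P r hr hdeg hcoeff s hs
  obtain ⟨T, hT⟩ : ∃ T : ℕ, 3^290 ≤ T := ⟨3^290, le_refl _⟩
  refine ⟨140 * r * 2^41 + 28 * (K0 + 1) + T, ?_⟩
  intro w N hw hwN hNw Sg hSg
  by_contra hlt
  push Not at hlt
  obtain ⟨hw1, hwK, hwT⟩ := wsplit _ _ _ _ hw
  have hwpos : 1 ≤ w := le_trans (Nat.succ_le_of_lt (by positivity)) hw1
  have hwK' : 28 * K0 ≤ w := by clear hT; omega
  obtain ⟨m, hminj, hm0, hmW, S, hSc, hSS, hSn⟩ := comb r w N (w^5) (by omega) hwpos Sg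
    (fun n hn => (hSg n hn).1) hlt
  let sol : ℕ → ℕ := fun n =>
    if h : ∃ x : ℕ, 0 < x ∧ s * (n.factorial : ℤ) = P.eval (x:ℤ) then h.choose else 0
  have hsol : ∀ n ∈ Sg, 0 < sol n ∧ s * (n.factorial : ℤ) = P.eval (sol n : ℤ) := by
    intro n hn
    have h := (hSg n hn).2
    have e : sol n = h.choose := dif_pos h
    rw [e]
    exact h.choose_spec
  have hSne : S.Nonempty := card_pos.1 (lt_of_le_of_lt (Nat.zero_le _) hSc)
  have hSin : ∀ n ∈ S, n ∈ Sg := by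
    intro n hn
    have := hSS n hn 0
    rwa [hm0, mul_zero, add_zero] at this
  obtain ⟨ns, hns⟩ : ∃ ns, ns = S.min' hSne := ⟨_, rfl⟩
  have hnsS : ns ∈ S := by rw [hns]; exact S.min'_mem hSne
  have hnsl : ∀ n ∈ S, ns ≤ n := by intro n hn; rw [hns]; exact S.min'_le n hn
  obtain ⟨f, hf⟩ : ∃ f, f = ns / (140 * r) := ⟨_, rfl⟩
  obtain ⟨J, hJ⟩ : ∃ J, J = 56 * 2^34 * w^29 + 1 := ⟨_, rfl⟩
  have hnsN := (hSg ns (hSin ns hnsS)).1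
  obtain ⟨p1, p2, p3, p4, p5, p6, p7⟩ := params r w N ns f J K0 hr hw1 hwK' hwN hNw hnsN.1 hf
    hnsN.2 hJ
  have hTN : 3^290 ≤ N := hT.trans (hwT.trans p4)
  have hKN : (K0:ℝ) + 1 ≤ N := by exact_mod_cast (by clear hT hTN; omega : K0 + 1 ≤ N)
  have hfr : 140 * r * f ≤ ns := by rw [hf]; exact Nat.mul_div_le _ _
  have hfr2 : ns < 140 * r * (f + 1) := by
    rw [hf]; exact Nat.lt_mul_div_succ _ (by omega)
  have key := core r w N f (27 + J) m hr (by omega) hwpos hmW hminj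
    (le_trans (Nat.pow_le_pow_right (by norm_num) (by norm_num)) hTN) p1 p2 p3 K0 (by positivity)
    (by exact_mod_cast hwK'.trans p4) S (fun n hn => (hSg n (hSin n hn)).1)
    (fun n l => sol (n + r * m l)) (fun n => (sol n : ℝ))
    (by
      intro n hn
      have hn' := hSin n hn
      obtain ⟨a1, a2⟩ := hsol n hn'
      obtain ⟨b1, b2⟩ := hK1 n (sol n) a1 a2
      have hb := (hSg n hn').1
      have hup : n ≤ 145 * r * (f + 1) := by
        have h1 := hSn n hn ns hnsS
        have e1 : 145 * r * (f+1) * 28 = 29 * (140 * r * (f+1)) := by ring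
        omega
      refine size_window r N f n (sol n) (K0 + 1) (K0 + 1) hr hTN p5 (by positivity) (by positivity)
        hKN hKN hb.1 hb.2 (hfr.trans (hnsl n hn)) hup (b1.trans ?_) (b2.trans ?_)
      · gcongr; linarith
      · gcongr; linarith)
    (by
      intro n hn l
      obtain ⟨a1, a2⟩ := hsol n (hSin n hn)
      obtain ⟨c1, c2⟩ := hsol _ (hSS n hn l)
      exact ⟨c1, hK2 n (r * m l) _ _ a1 c1 a2 c2⟩)
  have e1 : 27 + J + 1 - 28 = J := by omega
  rw [e1] at key
  have h2 : w^5 * J ≤ S.card * J := Nat.mul_le_mul_right _ hSc.le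
  omega

lemma exists_root (N : ℕ) : ∃ w : ℕ, w^34 ≤ N ∧ N < (w+1)^34 := by
  have h : ∃ v : ℕ, N < v^34 := ⟨N + 1, lt_of_lt_of_le (Nat.lt_succ_self N)
    (Nat.le_self_pow (by norm_num) _)⟩
  have h1 := Nat.find_spec h
  have h0 : Nat.find h ≠ 0 := by
    intro h2
    rw [h2] at h1
    simp at h1
  have h3 := Nat.find_min h (Nat.sub_lt (Nat.pos_of_ne_zero h0) one_pos)
  refine ⟨Nat.find h - 1, not_lt.1 h3, ?_⟩
  rw [Nat.sub_add_cancel (Nat.one_le_iff_ne_zero.2 h0)]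
  exact h1

lemma root_pow (w : ℕ) : (w:ℝ)^33 = ((w:ℝ)^34)^((33:ℝ)/34) := by
  have e : ((34:ℕ):ℝ) * ((33:ℝ)/34) = ((33:ℕ):ℝ) := by norm_num
  have e2 : (w:ℝ)^34 = (w:ℝ)^((34:ℕ):ℝ) := (Real.rpow_natCast _ 34).symm
  rw [e2, ← Real.rpow_mul (Nat.cast_nonneg w), e, Real.rpow_natCast]

lemma root_le (w N : ℕ) (h : w^34 ≤ N) : (w:ℝ)^33 ≤ (N:ℝ)^((33:ℝ)/34) := by
  rw [root_pow]
  have h1 : (w:ℝ)^34 ≤ N := by exact_mod_cast h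
  have h0 : (0:ℝ) ≤ (w:ℝ)^34 := pow_nonneg (Nat.cast_nonneg w) 34
  exact Real.rpow_le_rpow h0 h1 (by norm_num)

lemma final (P : ℤ[X]) (r : ℕ) (hr : 2 ≤ r) (hdeg : P.natDegree = r)
    (hcoeff : P.coeff (r - 1) = 0) (s : ℤ) (hs : s ≠ 0) :
    ∃ C : ℝ, 0 < C ∧ ∃ N₀ : ℕ, ∀ N : ℕ, N₀ ≤ N → ∀ Sg : Finset ℕ,
      (∀ n ∈ Sg, (N ≤ n ∧ n < 2 * N) ∧ ∃ x : ℕ, 0 < x ∧ s * (n.factorial : ℤ) = P.eval (x:ℤ)) →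
      (Sg.card : ℝ) ≤ C * (N : ℝ) ^ ((33 : ℝ) / 34) := by
  obtain ⟨w0, hw0⟩ := main_nat P r hr hdeg hcoeff s hs
  obtain ⟨c, hc⟩ : ∃ c : ℕ, c = 28 + (2^34 + 1) * r * 27 := ⟨_, rfl⟩
  have hc0 : 0 < c := by omega
  refine ⟨(c:ℝ), by exact_mod_cast hc0, (w0 + 2)^34, ?_⟩
  intro N hN Sg hSg
  obtain ⟨w, hw1, hw2⟩ := exists_root N
  have hw : w0 + 1 ≤ w := by
    have := lt_of_pow_lt_pow_left' 34 (lt_of_le_of_lt hN hw2)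
    omega
  have hNw : N ≤ 2^34 * w^34 := by
    rw [← mul_pow]
    exact hw2.le.trans (Nat.pow_le_pow_left (by omega) _)
  have h1 := hw0 w N (by omega) hw1 hNw Sg hSg
  have h2 : N / w ≤ 2^34 * w^33 := by
    apply Nat.div_le_of_le_mul
    calc N ≤ 2^34 * w^34 := hNw
      _ = w * (2^34 * w^33) := by ring
  have h3 : Sg.card ≤ c * w^33 := by
    have h4 : 1 ≤ w^33 := Nat.one_le_pow _ _ (by omega)
    calc Sg.card ≤ w^28 * 28 * w^5 + (N / w + 1) * r * 27 := h1
      _ ≤ w^28 * 28 * w^5 + (2^34 * w^33 + w^33) * r * 27 := by gcongr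
      _ = _ := by rw [hc]; ring
  have h5 : (w:ℝ)^33 ≤ (N:ℝ)^((33:ℝ)/34) := root_le w N hw1
  have h6 : (Sg.card : ℝ) ≤ (c:ℝ) * (w:ℝ)^33 := by exact_mod_cast h3
  exact h6.trans (mul_le_mul_of_nonneg_left h5 (Nat.cast_nonneg c))
end PFact

open scoped Nat Classical

/-- **Power saving for depressed polynomials** (Proposition 3.1).
Let `P` be a polynomial with integer coefficients of degree `r ≥ 2` whose coefficient of
`x^(r−1)` is zero, and let `s` be a nonzero integer. Then there exist a positive constant `C`
and a threshold `N₀`, depending only on `P` and `s`, such that for all integers `N ≥ N₀`, the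
number of integers `n` with `N ≤ n < 2N` for which there exists a positive integer `x` with
`s·n! = P(x)` is at most `C·N^(33/34)`. -/
theorem polynomial_factorial_power_saving_depressed
    (P : Polynomial ℤ) (r : ℕ) (hr : 2 ≤ r) (hdeg : P.natDegree = r)
    (hcoeff : P.coeff (r - 1) = 0) (s : ℤ) (hs : s ≠ 0) :
    ∃ C : ℝ, 0 < C ∧ ∃ N₀ : ℕ, ∀ N : ℕ, N₀ ≤ N →
      (((Finset.Ico N (2 * N)).filter
          (fun n => ∃ x : ℕ, 0 < x ∧ s * (n ! : ℤ) = P.eval (x : ℤ))).card : ℝ)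
        ≤ C * (N : ℝ) ^ ((33 : ℝ) / 34) := by
  obtain ⟨C, hC, N₀, h⟩ := PFact.final P r hr hdeg hcoeff s hs
  refine ⟨C, hC, N₀, fun N hN => h N hN _ ?_⟩
  intro n hn
  rw [Finset.mem_filter, Finset.mem_Ico] at hn
  exact hn
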